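/- Let R be a commutative noetherian ring. There are bijective correspondences between: (i) hereditary Tor-pairs (E, C) generated by classes of modules of finite flat dimension; (ii) hereditary cotorsion pairs (C, W) cogenerated by classes of pure-injective modules of finite injective dimension; (iii) functions φ : Spec R → ℤ_{≥0} with φ(p) ≤ depth(R_p) for all p; (iv) sequences of subsets X_0 ⊆ X_1 ⊆ ... ⊆ Spec R with Ass(Ω_{-i}(R)) ⊆ X_i for all i ≥ 0. The assignments are: a hereditary Tor-pair (E, C) of (i) yields the cotorsion pair (C, C^{⊥1}) of (ii); a function φ of (iii) yields the Tor-pair (E_φ, C_φ) with C_φ = {M : depth_{R_p}(M_p) ≥ φ(p) for all p ∈ Spec R}; a cotorsion pair (C, W) of (ii) yields the function φ_C(p) = inf{i ∈ ℤ_{≥0} : k(p) ∈ C_(i)} and the sequence X_n = Ass(C_(n)) := ∪_{M ∈ C_(n)} Ass M; and these assignments are mutually inverse bijections. -/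

import Mathlib

open CategoryTheory Opposite

noncomputable section

/-- Vanishing of the `n`-th Ext group of two `R`-modules. -/
def extV (R : Type) [Ring R] (M N : ModuleCat.{0} R) (n : ℕ) : Prop :=
  Subsingleton (((_root_.Ext ℤ (ModuleCat.{0} R) n).obj (op M)).obj N)

/-- Vanishing of the `n`-th Tor group of two `R`-modules. -/
def torV (R : Type) [CommRing R] (M N : ModuleCat.{0} R) (n : ℕ) : Prop :=
  Subsingleton (((Tor (ModuleCat.{0} R) n).obj M).obj N)

/-- `f : A →ₗ[R] B` is a pure monomorphism. -/
def IsPureMono (R : Type) [CommRing R] {A B : Type} [AddCommGroup A] [Module R A]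
    [AddCommGroup B] [Module R B] (f : A →ₗ[R] B) : Prop :=
  Function.Injective f ∧
    ∀ (Q : Type) [AddCommGroup Q] [Module R Q], Function.Injective (LinearMap.lTensor Q f)

/-- An `R`-module `N` is pure-injective if it is injective with respect to
pure monomorphisms. -/
def PureInjective (R : Type) [CommRing R] (N : Type) [AddCommGroup N] [Module R N] : Prop :=
  ∀ (A B : Type) [AddCommGroup A] [Module R A] [AddCommGroup B] [Module R B]
    (f : A →ₗ[R] B), IsPureMono R f → ∀ g : A →ₗ[R] N, ∃ h : B →ₗ[R] N, h.comp f = g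

/-- `N` has injective dimension at most `n`. -/
def injDimLE (R : Type) [Ring R] (N : ModuleCat.{0} R) (n : ℕ) : Prop :=
  ∀ M : ModuleCat.{0} R, ∀ j : ℕ, n < j → extV R M N j

/-- `M` has projective dimension at most `n`. -/
def projDimLE (R : Type) [Ring R] (M : ModuleCat.{0} R) (n : ℕ) : Prop :=
  ∀ N : ModuleCat.{0} R, ∀ j : ℕ, n < j → extV R M N j

/-- `M` has flat dimension at most `n`. -/
def flatDimLE (R : Type) [CommRing R] (M : ModuleCat.{0} R) (n : ℕ) : Prop :=
  ∀ N : ModuleCat.{0} R, ∀ j : ℕ, n < j → torV R M N j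

/-- The depth of a module over a commutative local ring. -/
def rdepth (A : Type) [CommRing A] [IsLocalRing A] (M : Type) [AddCommGroup M]
    [Module A M] : ℕ∞ :=
  sInf {n : ℕ∞ | ∃ i : ℕ, n = (i : ℕ∞) ∧
    ¬ extV A (ModuleCat.of A (IsLocalRing.ResidueField A)) (ModuleCat.of A M) i}

/-- `depth(R_p)`. -/
def ringDepthAt (R : Type) [CommRing R] (p : PrimeSpectrum R) : ℕ∞ :=
  rdepth (Localization.AtPrime p.asIdeal) (Localization.AtPrime p.asIdeal)

/-- `depth_{R_p}(M_p)`. -/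
def depthAt (R : Type) [CommRing R] (p : PrimeSpectrum R) (M : Type) [AddCommGroup M]
    [Module R M] : ℕ∞ :=
  rdepth (Localization.AtPrime p.asIdeal) (LocalizedModule p.asIdeal.primeCompl M)

/-- `f : M →ₗ[R] E` exhibits `E` as an injective envelope of `M`. -/
def IsInjectiveEnvelope (R : Type) [Ring R] {M E : Type} [AddCommGroup M] [Module R M]
    [AddCommGroup E] [Module R E] (f : M →ₗ[R] E) : Prop :=
  Module.Injective R E ∧ Function.Injective f ∧
    ∀ K : Submodule R E, K ≠ ⊥ → K ⊓ LinearMap.range f ≠ ⊥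

/-- The degree-`i` term of the Koszul cochain complex on `ℓ` generators over `A`:
a free module on the `i`-element subsets of `Fin ℓ`. -/
abbrev KosTerm (A : Type) [CommRing A] (ℓ i : ℕ) : Type :=
  {s : Finset (Fin ℓ) // s.card = i} → A

/-- The Koszul cochain differential (for the sequence `x`), from degree `i`
to degree `i+1`. -/
def kosD (A : Type) [CommRing A] {ℓ : ℕ} (x : Fin ℓ → A) (i : ℕ) :
    KosTerm A ℓ i →ₗ[A] KosTerm A ℓ (i + 1) where
  toFun f T := ∑ t ∈ T.1.attach,
    ((-1 : A) ^ ((T.1.filter (fun s => s < t.1)).card) * x t.1) •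
      f ⟨T.1.erase t.1, by
        rw [Finset.card_erase_of_mem t.2, T.2]; omega⟩
  map_add' f g := by
    funext T
    simp [mul_add, Finset.sum_add_distrib]
  map_smul' a f := by
    funext T
    rw [RingHom.id_apply]
    simp only [Pi.smul_apply, smul_eq_mul, Finset.mul_sum]
    exact Finset.sum_congr rfl fun t _ => by ring

/-- `S_k(x; A)`: the cokernel of the `(k-1)`-st differential of the Koszul cochain
complex of the sequence `x` (with `S_0 = A`). -/
def KosCoker (A : Type) [CommRing A] {ℓ : ℕ} (x : Fin ℓ → A) : ℕ → Type
  | 0 => A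
  | m + 1 => KosTerm A ℓ (m + 1) ⧸ LinearMap.range (kosD A x m)

instance kosCokerAddCommGroup (A : Type) [CommRing A] {ℓ : ℕ} (x : Fin ℓ → A) :
    (k : ℕ) → AddCommGroup (KosCoker A x k)
  | 0 => inferInstanceAs (AddCommGroup A)
  | m + 1 => inferInstanceAs
      (AddCommGroup (KosTerm A ℓ (m + 1) ⧸ LinearMap.range (kosD A x m)))

instance kosCokerModule (A : Type) [CommRing A] {ℓ : ℕ} (x : Fin ℓ → A) :
    (k : ℕ) → Module A (KosCoker A x k)
  | 0 => inferInstanceAs (Module A A)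
  | m + 1 => inferInstanceAs
      (Module A (KosTerm A ℓ (m + 1) ⧸ LinearMap.range (kosD A x m)))

/-- The `R`-module structure on `S_k(x; A)` obtained by restriction of scalars. -/
instance kosCokerModule' (R A : Type) [CommRing R] [CommRing A] [Algebra R A]
    {ℓ : ℕ} (x : Fin ℓ → A) (k : ℕ) : Module R (KosCoker A x k) :=
  Module.compHom _ (algebraMap R A)

/-- The left Ext^1-orthogonal class. -/
def leftPerp1 (R : Type) [Ring R] (𝒳 : Set (ModuleCat.{0} R)) : Set (ModuleCat.{0} R) :=
  {M | ∀ X ∈ 𝒳, extV R M X 1}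

/-- The right Ext^1-orthogonal class. -/
def rightPerp1 (R : Type) [Ring R] (𝒳 : Set (ModuleCat.{0} R)) : Set (ModuleCat.{0} R) :=
  {N | ∀ X ∈ 𝒳, extV R X N 1}

/-- A cotorsion pair. -/
def IsCotorsionPair (R : Type) [Ring R] (𝒞 𝒲 : Set (ModuleCat.{0} R)) : Prop :=
  𝒞 = leftPerp1 R 𝒲 ∧ 𝒲 = rightPerp1 R 𝒞

/-- A hereditary cotorsion pair. -/
def IsHereditaryCotorsionPair (R : Type) [Ring R] (𝒞 𝒲 : Set (ModuleCat.{0} R)) : Prop :=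
  IsCotorsionPair R 𝒞 𝒲 ∧ ∀ X ∈ 𝒞, ∀ Y ∈ 𝒲, ∀ i : ℕ, 1 ≤ i → extV R X Y i

/-- The class `𝒞_(i)` of a cotorsion pair. -/
def cotShift (R : Type) [Ring R] (𝒲 : Set (ModuleCat.{0} R)) (i : ℕ) : Set (ModuleCat.{0} R) :=
  {M | ∀ Y ∈ 𝒲, ∀ j : ℕ, i < j → extV R M Y j}

/-- The left Tor_1-orthogonal class. -/
def torLeft1 (R : Type) [CommRing R] (𝒳 : Set (ModuleCat.{0} R)) : Set (ModuleCat.{0} R) :=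
  {M | ∀ X ∈ 𝒳, torV R M X 1}

/-- The right Tor_1-orthogonal class. -/
def torRight1 (R : Type) [CommRing R] (𝒳 : Set (ModuleCat.{0} R)) : Set (ModuleCat.{0} R) :=
  {M | ∀ X ∈ 𝒳, torV R X M 1}

/-- A Tor-pair. -/
def IsTorPair (R : Type) [CommRing R] (ℰ 𝒞 : Set (ModuleCat.{0} R)) : Prop :=
  ℰ = torLeft1 R 𝒞 ∧ 𝒞 = torRight1 R ℰ

/-- A hereditary Tor-pair. -/
def IsHereditaryTorPair (R : Type) [CommRing R] (ℰ 𝒞 : Set (ModuleCat.{0} R)) : Prop :=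
  IsTorPair R ℰ 𝒞 ∧ ∀ X ∈ ℰ, ∀ Y ∈ 𝒞, ∀ i : ℕ, 1 ≤ i → torV R X Y i

/-- The residue field `k(p)` of `R_p` as an `R`-module. -/
abbrev resField (R : Type) [CommRing R] (p : PrimeSpectrum R) : Type :=
  LocalizedModule p.asIdeal.primeCompl (R ⧸ p.asIdeal)

/-- Minimal injective coresolution data; `C n` plays the role of the cosyzygy. -/
structure CosyzygySeq (R : Type) [CommRing R] (M : Type) [AddCommGroup M] [Module R M] :
    Type 1 where
  C : ℕ → ModuleCat.{0} R
  iso0 : (↥(C 0)) ≃ₗ[R] M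
  E : ℕ → ModuleCat.{0} R
  emb : ∀ n, (↥(C n)) →ₗ[R] (↥(E n))
  env : ∀ n, IsInjectiveEnvelope R (emb n)
  isoSucc : ∀ n, (↥(C (n + 1))) ≃ₗ[R] ((↥(E n)) ⧸ LinearMap.range (emb n))

section Stmt17

variable (R : Type) [CommRing R]

/-- Collection (i): hereditary Tor-pairs generated by classes of modules of finite
flat dimension. -/
def GoodI (ℰ 𝒞 : Set (ModuleCat.{0} R)) : Prop :=
  IsHereditaryTorPair R ℰ 𝒞 ∧
    ∃ 𝒢 : Set (ModuleCat.{0} R), (∀ X ∈ 𝒢, ∃ n : ℕ, flatDimLE R X n) ∧ 𝒞 = torRight1 R 𝒢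

/-- Collection (ii): hereditary cotorsion pairs cogenerated by classes of pure-injective
modules of finite injective dimension. -/
def GoodII (𝒞 𝒲 : Set (ModuleCat.{0} R)) : Prop :=
  IsHereditaryCotorsionPair R 𝒞 𝒲 ∧
    ∃ Pcl : Set (ModuleCat.{0} R),
      (∀ X ∈ Pcl, PureInjective R ↥X ∧ ∃ n : ℕ, injDimLE R X n) ∧ 𝒞 = leftPerp1 R Pcl

/-- Collection (iii): functions on the spectrum bounded by the depth function. -/
def GoodIII (φ : PrimeSpectrum R → ℕ) : Prop :=
  ∀ p : PrimeSpectrum R, (φ p : ℕ∞) ≤ ringDepthAt R p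

/-- Collection (iv): increasing sequences of subsets of the spectrum containing the
associated primes of the cosyzygies of `R`. -/
def GoodIV (X : ℕ → Set (PrimeSpectrum R)) : Prop :=
  (∀ n, X n ⊆ X (n + 1)) ∧
  ∀ (n : ℕ) (seq : CosyzygySeq R R),
    {p : PrimeSpectrum R | p.asIdeal ∈ associatedPrimes R ↥(seq.C n)} ⊆ X n

/-- The assignment (iii) → (i): the right class of the Tor-pair associated to `φ`. -/
def depthClass (φ : PrimeSpectrum R → ℕ) : Set (ModuleCat.{0} R) :=
  {M | ∀ p : PrimeSpectrum R, (φ p : ℕ∞) ≤ depthAt R p ↥M}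

/-- The assignment (ii) → (iii): `φ_𝒞(p) = inf {i ∣ k(p) ∈ 𝒞_(i)}`. -/
def phiOfCot (𝒲 : Set (ModuleCat.{0} R)) : PrimeSpectrum R → ℕ :=
  fun p => sInf {i : ℕ | ModuleCat.of R (resField R p) ∈ cotShift R 𝒲 i}

/-- The assignment (ii) → (iv): `X_n = Ass 𝒞_(n)`. -/
def seqOfCot (𝒲 : Set (ModuleCat.{0} R)) : ℕ → Set (PrimeSpectrum R) :=
  fun n => {p | ∃ M ∈ cotShift R 𝒲 n, p.asIdeal ∈ associatedPrimes R ↥M}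

end Stmt17


section Bridge
variable {R : Type} [CommRing R]

open HomologicalComplex in
theorem extV_succ_iff_res {M : ModuleCat.{0} R} (P : ProjectiveResolution M) (N : ModuleCat.{0} R)
    (n : ℕ) : extV R M N (n+1) ↔ ∀ f : P.complex.X (n+1) ⟶ N, P.complex.d (n+2) (n+1) ≫ f = 0 →
      ∃ g : P.complex.X n ⟶ N, P.complex.d (n+1) n ≫ g = f := by
  unfold extV
  rw [(P.isoExt (R := ℤ) (n+1) N).toLinearEquiv.toEquiv.subsingleton_congr]
  rw [← ModuleCat.isZero_iff_subsingleton, ← HomologicalComplex.exactAt_iff_isZero_homology,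
    HomologicalComplex.exactAt_iff' _ n (n+1) (n+2) (by simp) (by simp), ShortComplex.moduleCat_exact_iff]
  rfl

theorem extV_zero_iff_res {M : ModuleCat.{0} R} (P : ProjectiveResolution M) (N : ModuleCat.{0} R)
     : extV R M N 0 ↔ ∀ f : P.complex.X 0 ⟶ N, P.complex.d 1 0 ≫ f = 0 → f = 0 := by
  unfold extV
  rw [(P.isoExt (R := ℤ) 0 N).toLinearEquiv.toEquiv.subsingleton_congr]
  rw [← ModuleCat.isZero_iff_subsingleton, ← HomologicalComplex.exactAt_iff_isZero_homology,
    HomologicalComplex.exactAt_iff' _ 0 0 1 (by simp) (by simp), ShortComplex.moduleCat_exact_iff]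
  constructor
  · intro h f hf
    obtain ⟨x, hx⟩ := h f hf
    rw [← hx]
    have : (P.complex.linearYonedaObj ℤ N).d 0 0 = 0 := by
      apply HomologicalComplex.shape; simp
    change (P.complex.linearYonedaObj ℤ N).d 0 0 x = 0
    rw [this]; rfl
  · intro h f hf
    exact ⟨0, by rw [map_zero]; exact (h f hf).symm⟩

theorem extV_iff (M N : ModuleCat.{0} R) (n : ℕ) :
    extV R M N n ↔ Subsingleton (Abelian.Ext M N n) := by
  let P := projectiveResolution M
  cases n with
  | zero =>
    rw [extV_zero_iff_res P, Abelian.Ext.homEquiv₀.subsingleton_congr]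
    constructor
    · intro h
      refine ⟨fun a b => ?_⟩
      rw [← sub_eq_zero]
      have := h (P.π.f 0 ≫ (a - b)) (by erw [P.complex_d_comp_π_f_zero_assoc]; exact Limits.zero_comp)
      have h2 : Epi (P.π.f 0) := inferInstance
      exact (cancel_epi (P.π.f 0)).1 (by rw [this]; exact Limits.comp_zero.symm)
    · intro h f hf
      have h0 := P.exact₀
      have h2 : Epi (P.π.f 0) := inferInstance
      obtain ⟨g, hg⟩ : ∃ g : M ⟶ N, P.π.f 0 ≫ g = f :=
        ⟨h0.desc f hf, h0.g_desc f hf⟩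
      rw [← hg, Subsingleton.elim g 0]; exact Limits.comp_zero
  | succ n =>
    rw [extV_succ_iff_res P]
    constructor
    · intro h
      refine subsingleton_of_forall_eq 0 fun x => ?_
      obtain ⟨f, hf, rfl⟩ := P.extMk_surjective x (n+2) rfl
      rw [P.extMk_eq_zero_iff _ _ _ _ n rfl]
      exact h f hf
    · intro h f hf
      exact (P.extMk_eq_zero_iff f (n+2) rfl hf n rfl).1 (Subsingleton.elim _ _)

open scoped MonoidalCategory in
theorem torV_succ_iff_res (X : ModuleCat.{0} R) {N : ModuleCat.{0} R} (P : ProjectiveResolution N)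
    (n : ℕ) : torV R X N (n+1) ↔
      Function.Exact (LinearMap.lTensor X (P.complex.d (n+2) (n+1)).hom)
        (LinearMap.lTensor X (P.complex.d (n+1) n).hom) := by
  change Subsingleton ((((MonoidalCategory.tensoringLeft (ModuleCat.{0} R)).obj X).leftDerived (n+1)).obj N) ↔ _
  rw [(P.isoLeftDerivedObj ((MonoidalCategory.tensoringLeft (ModuleCat.{0} R)).obj X) (n+1)).toLinearEquiv.toEquiv.subsingleton_congr]
  rw [← ModuleCat.isZero_iff_subsingleton]
  change Limits.IsZero (HomologicalComplex.homology _ _) ↔ _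
  rw [← HomologicalComplex.exactAt_iff_isZero_homology,
    HomologicalComplex.exactAt_iff' _ (n+2) (n+1) n (by simp) (by simp), 
    ShortComplex.ShortExact.moduleCat_exact_iff_function_exact]
  rfl

end Bridge


section Toolkit

/-- unbundled Ext vanishing -/
def ev (R : Type) [CommRing R] (M N : Type) [AddCommGroup M] [Module R M] [AddCommGroup N]
    [Module R N] (n : ℕ) : Prop := extV R (ModuleCat.of R M) (ModuleCat.of R N) n

/-- short exact sequences -/
structure SES {R : Type} [CommRing R] {A B C : Type} [AddCommGroup A] [Module R A]
    [AddCommGroup B] [Module R B] [AddCommGroup C] [Module R C]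
    (f : A →ₗ[R] B) (g : B →ₗ[R] C) : Prop where
  inj : Function.Injective f
  ex : Function.Exact f g
  surj : Function.Surjective g

variable {R : Type} [CommRing R] {A B C M N I K P : Type} [AddCommGroup A] [Module R A]
  [AddCommGroup B] [Module R B] [AddCommGroup C] [Module R C] [AddCommGroup M] [Module R M]
  [AddCommGroup N] [Module R N]
  {f : A →ₗ[R] B} {g : B →ₗ[R] C}

theorem ev_iff (n : ℕ) : ev R M N n ↔
    Subsingleton (Abelian.Ext (ModuleCat.of R M) (ModuleCat.of R N) n) := extV_iff _ _ _

theorem ev_zero_iff : ev R M N 0 ↔ ∀ f : M →ₗ[R] N, f = 0 := by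
  rw [ev_iff, Abelian.Ext.homEquiv₀.subsingleton_congr]
  constructor
  · intro h f
    have := h.elim (ModuleCat.ofHom f) 0
    exact congrArg ModuleCat.Hom.hom this
  · intro h
    refine subsingleton_of_forall_eq 0 fun x => ?_
    ext1
    exact h x.hom

theorem SES.short (h : SES f g) : (ShortComplex.mk (ModuleCat.ofHom f) (ModuleCat.ofHom g)
    (by ext x; exact (h.ex (f x)).2 ⟨x, rfl⟩)).ShortExact where
  exact := (ShortComplex.ShortExact.moduleCat_exact_iff_function_exact _).mpr h.ex
  mono_f := (ModuleCat.mono_iff_injective _).2 h.inj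
  epi_g := (ModuleCat.epi_iff_surjective _).2 h.surj

theorem Subs0 {G : Type} [AddGroup G] (h : ∀ x : G, x = 0) : Subsingleton G :=
  subsingleton_of_forall_eq 0 h

theorem ev_c1 (h : SES f g) {n : ℕ} (h1 : ev R A N n) (h2 : ev R C N n) : ev R B N n := by
  rw [ev_iff] at *
  refine subsingleton_of_forall_eq 0 fun x => ?_
  obtain ⟨y, rfl⟩ := Abelian.Ext.contravariant_sequence_exact₂ h.short (ModuleCat.of R N) x (h1.elim _ _)
  rw [h2.elim y 0, Abelian.Ext.comp_zero]

theorem ev_c2 (h : SES f g) {n : ℕ} (h1 : ev R B N n) (h2 : ev R C N (n+1)) : ev R A N n := by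
  rw [ev_iff] at *
  refine subsingleton_of_forall_eq 0 fun x => ?_
  obtain ⟨y, rfl⟩ := Abelian.Ext.contravariant_sequence_exact₁ h.short (ModuleCat.of R N) x
    (add_comm 1 n) (h2.elim _ _)
  rw [h1.elim y 0, Abelian.Ext.comp_zero]

theorem ev_c3 (h : SES f g) {n : ℕ} (h1 : ev R A N n) (h2 : ev R B N (n+1)) : ev R C N (n+1) := by
  rw [ev_iff] at *
  refine subsingleton_of_forall_eq 0 fun x => ?_
  obtain ⟨y, rfl⟩ := Abelian.Ext.contravariant_sequence_exact₃ h.short (ModuleCat.of R N) x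
    (h2.elim _ _) (add_comm 1 n)
  rw [h1.elim y 0, Abelian.Ext.comp_zero]

theorem ev_k1 (h : SES f g) {n : ℕ} (h1 : ev R N A n) (h2 : ev R N C n) : ev R N B n := by
  rw [ev_iff] at *
  refine subsingleton_of_forall_eq 0 fun x => ?_
  obtain ⟨y, rfl⟩ := Abelian.Ext.covariant_sequence_exact₂ (ModuleCat.of R N) h.short x (h2.elim _ _)
  rw [h1.elim y 0, Abelian.Ext.zero_comp]

theorem ev_k2 (h : SES f g) {n : ℕ} (h1 : ev R N C n) (h2 : ev R N B (n+1)) : ev R N A (n+1) := by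
  rw [ev_iff] at *
  refine subsingleton_of_forall_eq 0 fun x => ?_
  obtain ⟨y, rfl⟩ := Abelian.Ext.covariant_sequence_exact₁ (ModuleCat.of R N) h.short x
    (h2.elim _ _) rfl
  rw [h1.elim y 0, Abelian.Ext.zero_comp]

theorem ev_k3 (h : SES f g) {n : ℕ} (h1 : ev R N B n) (h2 : ev R N A (n+1)) : ev R N C n := by
  rw [ev_iff] at *
  refine subsingleton_of_forall_eq 0 fun x => ?_
  obtain ⟨y, rfl⟩ := Abelian.Ext.covariant_sequence_exact₃ (ModuleCat.of R N) h.short x rfl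
    (h2.elim _ _)
  rw [h1.elim y 0, Abelian.Ext.zero_comp]

theorem ev_proj [Module.Projective R M] (n : ℕ) : ev R M N (n+1) := by
  rw [ev_iff]
  have : Projective (ModuleCat.of R M) := (IsProjective.iff_projective M).1 inferInstance
  exact Abelian.Ext.subsingleton_of_projective _ _ _

theorem ev_inj (h : Module.Injective R N) (n : ℕ) : ev R M N (n+1) := by
  rw [ev_iff]
  have : Injective (ModuleCat.of R N) := (Module.injective_iff_injective_object R N).1 h
  exact Abelian.Ext.subsingleton_of_injective _ _ _

theorem ev_retract {M' : Type} [AddCommGroup M'] [Module R M'] (i : M' →ₗ[R] M) (r : M →ₗ[R] M')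
    (h : r.comp i = LinearMap.id) {n : ℕ} (h1 : ev R M N n) : ev R M' N n := by
  rw [ev_iff] at *
  refine subsingleton_of_forall_eq 0 fun x => ?_
  have e : ModuleCat.ofHom i ≫ ModuleCat.ofHom r = 𝟙 _ := by
    rw [← ModuleCat.ofHom_comp, h]; rfl
  rw [← Abelian.Ext.mk₀_id_comp x, ← e, ← Abelian.Ext.mk₀_comp_mk₀_assoc,
    h1.elim ((Abelian.Ext.mk₀ (ModuleCat.ofHom r)).comp x (zero_add n)) 0, Abelian.Ext.comp_zero]

theorem ev_congr {M' : Type} [AddCommGroup M'] [Module R M'] (e : M ≃ₗ[R] M') {n : ℕ} :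
    ev R M N n ↔ ev R M' N n :=
  ⟨ev_retract e.symm.toLinearMap e.toLinearMap (by ext; simp),
   ev_retract e.toLinearMap e.symm.toLinearMap (by ext; simp)⟩

theorem ev_retract' {N' : Type} [AddCommGroup N'] [Module R N'] (i : N' →ₗ[R] N) (r : N →ₗ[R] N')
    (h : r.comp i = LinearMap.id) {n : ℕ} (h1 : ev R M N n) : ev R M N' n := by
  rw [ev_iff] at *
  refine subsingleton_of_forall_eq 0 fun x => ?_
  have e : ModuleCat.ofHom i ≫ ModuleCat.ofHom r = 𝟙 _ := by
    rw [← ModuleCat.ofHom_comp, h]; rfl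
  rw [← Abelian.Ext.comp_mk₀_id x, ← e, ← Abelian.Ext.mk₀_comp_mk₀, ← Abelian.Ext.comp_assoc_of_third_deg_zero,
    h1.elim (x.comp (Abelian.Ext.mk₀ (ModuleCat.ofHom i)) (add_zero n)) 0, Abelian.Ext.zero_comp]

theorem ev_congr' {N' : Type} [AddCommGroup N'] [Module R N'] (e : N ≃ₗ[R] N') {n : ℕ} :
    ev R M N n ↔ ev R M N' n :=
  ⟨ev_retract' e.symm.toLinearMap e.toLinearMap (by ext; simp),
   ev_retract' e.toLinearMap e.symm.toLinearMap (by ext; simp)⟩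

theorem ev_lift (h : SES f g) (h1 : ev R M A 1) (u : M →ₗ[R] C) : ∃ v : M →ₗ[R] B, g.comp v = u := by
  rw [ev_iff] at *
  obtain ⟨y, hy⟩ := Abelian.Ext.covariant_sequence_exact₃ (ModuleCat.of R M) h.short
    (Abelian.Ext.mk₀ (ModuleCat.ofHom u)) rfl (h1.elim _ _)
  obtain ⟨v, rfl⟩ := (Abelian.Ext.mk₀_bijective _ _).2 y
  rw [Abelian.Ext.mk₀_comp_mk₀] at hy
  have := (Abelian.Ext.mk₀_bijective _ _).1 hy
  exact ⟨v.hom, congrArg ModuleCat.Hom.hom this⟩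

theorem ev_of_lift (h : SES f g) (h1 : ev R M B 1)
    (h2 : ∀ u : M →ₗ[R] C, ∃ v : M →ₗ[R] B, g.comp v = u) : ev R M A 1 := by
  rw [ev_iff] at *
  refine subsingleton_of_forall_eq 0 fun x => ?_
  obtain ⟨y, rfl⟩ := Abelian.Ext.covariant_sequence_exact₁ (ModuleCat.of R M) h.short x (h1.elim _ _) rfl
  obtain ⟨u, rfl⟩ := (Abelian.Ext.mk₀_bijective _ _).2 y
  obtain ⟨v, hv⟩ := h2 u.hom
  have : u = ModuleCat.ofHom v ≫ ModuleCat.ofHom g := by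
    ext1; exact hv.symm
  rw [this, ← Abelian.Ext.mk₀_comp_mk₀, Abelian.Ext.comp_assoc_of_second_deg_zero]
  erw [h.short.comp_extClass]
  rw [Abelian.Ext.comp_zero]

theorem ev_extend (h : SES f g) (h1 : ev R C N 1) (u : A →ₗ[R] N) : ∃ v : B →ₗ[R] N, v.comp f = u := by
  rw [ev_iff] at *
  obtain ⟨y, hy⟩ := Abelian.Ext.contravariant_sequence_exact₁ h.short (ModuleCat.of R N)
    (Abelian.Ext.mk₀ (ModuleCat.ofHom u)) rfl (h1.elim _ _)
  obtain ⟨v, rfl⟩ := (Abelian.Ext.mk₀_bijective _ _).2 y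
  rw [Abelian.Ext.mk₀_comp_mk₀] at hy
  have := (Abelian.Ext.mk₀_bijective _ _).1 hy
  exact ⟨v.hom, congrArg ModuleCat.Hom.hom this⟩

theorem ev_of_extend (h : SES f g) (h1 : ev R B N 1)
    (h2 : ∀ u : A →ₗ[R] N, ∃ v : B →ₗ[R] N, v.comp f = u) : ev R C N 1 := by
  rw [ev_iff] at *
  refine subsingleton_of_forall_eq 0 fun x => ?_
  obtain ⟨y, rfl⟩ := Abelian.Ext.contravariant_sequence_exact₃ h.short (ModuleCat.of R N) x (h1.elim _ _) (add_zero 1)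
  obtain ⟨u, rfl⟩ := (Abelian.Ext.mk₀_bijective _ _).2 y
  obtain ⟨v, hv⟩ := h2 u.hom
  have : u = ModuleCat.ofHom f ≫ ModuleCat.ofHom v := by
    ext1; exact hv.symm
  rw [this, ← Abelian.Ext.mk₀_comp_mk₀, ← Abelian.Ext.comp_assoc_of_second_deg_zero]
  erw [h.short.extClass_comp]
  rw [Abelian.Ext.zero_comp]

theorem ses_sub (K : Submodule R M) : SES K.subtype K.mkQ :=
  ⟨K.injective_subtype, LinearMap.exact_subtype_mkQ K, K.mkQ_surjective⟩

theorem ses_ker (h : Function.Surjective g) : SES (LinearMap.ker g).subtype g :=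
  ⟨Submodule.injective_subtype _, LinearMap.exact_subtype_ker_map g, h⟩

theorem ses_coker (h : Function.Injective f) : SES f (LinearMap.range f).mkQ :=
  ⟨h, LinearMap.exact_map_mkQ_range f, Submodule.mkQ_surjective _⟩

theorem ses_range (g : B →ₗ[R] C) : SES (LinearMap.ker g).subtype g.rangeRestrict := by
  refine ⟨Submodule.injective_subtype _, ?_, g.surjective_rangeRestrict⟩
  have := LinearMap.exact_subtype_ker_map g.rangeRestrict
  rw [LinearMap.ker_rangeRestrict] at this
  exact this

/-- dimension shifting, first variable -/
theorem ev_shift_l (h : SES f g) [Module.Projective R B] (n : ℕ) :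
    ev R C N (n+2) ↔ ev R A N (n+1) :=
  ⟨fun h1 => ev_c2 h (ev_proj n) h1, fun h1 => ev_c3 h h1 (ev_proj _)⟩

/-- dimension shifting, second variable -/
theorem ev_shift_r (h : SES f g) (hB : Module.Injective R B) (n : ℕ) :
    ev R N A (n+2) ↔ ev R N C (n+1) :=
  ⟨fun h1 => ev_k3 h (ev_inj hB n) h1, fun h1 => ev_k2 h h1 (ev_inj hB _)⟩

theorem ev_iff_lift (h : SES f g) (hB : Module.Injective R B) :
    ev R M A 1 ↔ ∀ u : M →ₗ[R] C, ∃ v : M →ₗ[R] B, g.comp v = u :=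
  ⟨ev_lift h, ev_of_lift h (ev_inj hB 0)⟩

theorem ev_iff_extend (h : SES f g) [Module.Projective R B] :
    ev R C N 1 ↔ ∀ u : A →ₗ[R] N, ∃ v : B →ₗ[R] N, v.comp f = u :=
  ⟨ev_extend h, ev_of_extend h (ev_proj 0)⟩

theorem exists_inj (R : Type) [CommRing R] (N : Type) [AddCommGroup N] [Module R N] :
    ∃ (I : Type) (_ : AddCommGroup I) (_ : Module R I) (f : N →ₗ[R] I),
      Module.Injective R I ∧ Function.Injective f := by
  let P : InjectivePresentation (ModuleCat.of R N) := (EnoughInjectives.presentation _).some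
  refine ⟨P.J, inferInstance, inferInstance, P.f.hom, ?_, ?_⟩
  · have h : Injective (ModuleCat.of R P.J) := P.injective
    exact (Module.injective_iff_injective_object R P.J).2 h
  · exact (ModuleCat.mono_iff_injective _).1 P.mono

/-- a canonical projective (free) cover -/
abbrev Fr (R M : Type) [CommRing R] [AddCommGroup M] [Module R M] : Type := M →₀ R
def frMap (R M : Type) [CommRing R] [AddCommGroup M] [Module R M] : Fr R M →ₗ[R] M :=
  Finsupp.linearCombination R id
theorem frMap_surj (R M : Type) [CommRing R] [AddCommGroup M] [Module R M] :
    Function.Surjective (frMap R M) := Finsupp.linearCombination_id_surjective R M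
/-- syzygy -/
abbrev Syz (R M : Type) [CommRing R] [AddCommGroup M] [Module R M] : Type := LinearMap.ker (frMap R M)
theorem ses_syz (R M : Type) [CommRing R] [AddCommGroup M] [Module R M] :
  SES (A := Syz R M) (B := Fr R M) (LinearMap.ker (frMap R M)).subtype (frMap R M) := ses_ker (frMap_surj R M)

theorem ev_finsupp (ι : Type) (h : ev R M N 1) : ev R (ι →₀ M) N 1 := by
  obtain ⟨I, _, _, f, hI, hf⟩ := exists_inj R N
  rw [ev_iff_lift (ses_coker hf) hI] at *
  intro u
  choose v hv using fun i => h (u.comp (Finsupp.lsingle i))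
  refine ⟨Finsupp.lsum R v, ?_⟩
  ext i x
  have := LinearMap.congr_fun (hv i) x
  simpa using this

theorem ev_finsupp_all (ι : Type) {n : ℕ} (h : ev R M N (n+1)) : ev R (ι →₀ M) N (n+1) := by
  induction n generalizing N with
  | zero => exact ev_finsupp ι h
  | succ n ih =>
    obtain ⟨I, _, _, f, hI, hf⟩ := exists_inj R N
    rw [ev_shift_r (ses_coker hf) hI] at *
    exact ih h

theorem ev_subsingleton [Subsingleton M] (n : ℕ) : ev R M N n := by
  have : ev R M N 0 := ev_zero_iff.2 fun f => by ext x; rw [Subsingleton.elim x 0]; simp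
  cases n with
  | zero => exact this
  | succ n => 
    have : Module.Projective R M := inferInstance
    exact ev_proj n

end Toolkit


section CharMod
variable {R : Type} [CommRing R] {A B C M N : Type} [AddCommGroup A] [Module R A]
  [AddCommGroup B] [Module R B] [AddCommGroup C] [Module R C] [AddCommGroup M] [Module R M]
  [AddCommGroup N] [Module R N]
  {f : A →ₗ[R] B} {g : B →ₗ[R] C}

open CharacterModule

theorem exists_char_not_mem (S : Submodule R A) {a : A} (ha : a ∉ S) :
    ∃ c : CharacterModule A, (∀ s ∈ S, c s = 0) ∧ c a ≠ 0 := by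
  have : S.mkQ a ≠ 0 := by simpa using ha
  obtain ⟨c, hc⟩ := exists_character_apply_ne_zero_of_ne_zero this
  refine ⟨dual S.mkQ c, fun s hs => ?_, hc⟩
  change c (S.mkQ s) = 0
  rw [(by simpa using hs : S.mkQ s = 0)]
  exact map_zero c

theorem exact_iff_dual (h0 : g.comp f = 0) : Function.Exact f g ↔
    ∀ c : CharacterModule B, dual f c = 0 → ∃ c', dual g c' = c := by
  constructor
  · intro h c hc
    have hs : LinearMap.ker g ≤ (LinearMap.range f) := fun x hx => (h x).1 hx
    let c1 : B ⧸ (LinearMap.ker g).toAddSubgroup →+ AddCircle (1:ℚ) :=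
      QuotientAddGroup.lift _ c (by
        intro x hx
        obtain ⟨y, rfl⟩ := hs hx
        exact DFunLike.congr_fun hc y)
    let i : B ⧸ LinearMap.ker g →ₗ[R] C := (LinearMap.ker g).liftQ g le_rfl
    have hi : Function.Injective i := by
      rw [← LinearMap.ker_eq_bot]; exact Submodule.ker_liftQ_eq_bot _ _ _ le_rfl
    obtain ⟨c2, hc2⟩ := dual_surjective_of_injective i hi c1
    refine ⟨c2, ?_⟩
    ext x
    exact DFunLike.congr_fun hc2 ((LinearMap.ker g).mkQ x)
  · intro h x
    constructor
    · intro hx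
      by_contra hn
      obtain ⟨c, h1, h2⟩ := exists_char_not_mem (LinearMap.range f) (a := x) hn
      obtain ⟨c', rfl⟩ := h c (by ext y; exact h1 _ ⟨y, rfl⟩)
      apply h2
      change c' (g x) = 0
      rw [hx]; exact map_zero c'
    · rintro ⟨y, rfl⟩
      exact LinearMap.congr_fun h0 y

theorem SES.dual (h : SES f g) : SES (CharacterModule.dual g) (CharacterModule.dual f) := by
  have h0 : g.comp f = 0 := by ext x; exact (h.ex (f x)).2 ⟨x, rfl⟩
  refine ⟨dual_injective_of_surjective _ h.surj, fun c => ⟨(exact_iff_dual h0).1 h.ex c, ?_⟩,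
    dual_surjective_of_injective _ h.inj⟩
  rintro ⟨d, rfl⟩
  rw [← LinearMap.comp_apply, ← dual_comp, h0, dual_zero]; rfl

theorem exact_rTensor_iff (h0 : g.comp f = 0) : Function.Exact (f.rTensor M) (g.rTensor M) ↔
    ∀ u : B →ₗ[R] CharacterModule M, u.comp f = 0 → ∃ v : C →ₗ[R] CharacterModule M, v.comp g = u := by
  rw [exact_iff_dual (by rw [← LinearMap.rTensor_comp, h0, LinearMap.rTensor_zero])]
  have key : ∀ {X Y : Type} [AddCommGroup X] [Module R X] [AddCommGroup Y] [Module R Y] (k : X →ₗ[R] Y)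
    (w : Y →ₗ[R] CharacterModule M), CharacterModule.dual (k.rTensor M) (homEquiv w) = homEquiv (w.comp k) := by
    intro X Y _ _ _ _ k w
    apply homEquiv.symm.injective
    rw [LinearEquiv.symm_apply_apply]
    rfl
  constructor
  · intro h u hu
    obtain ⟨c, hc⟩ := h (homEquiv u) (by rw [key, hu, map_zero])
    obtain ⟨v, rfl⟩ := homEquiv.surjective c
    exact ⟨v, homEquiv.injective (by rw [← key, hc])⟩
  · intro h c hc
    obtain ⟨u, rfl⟩ := homEquiv.surjective c
    obtain ⟨v, hv⟩ := h u (homEquiv.injective (by rw [← key, hc, map_zero]))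
    exact ⟨homEquiv v, by rw [key, hv]⟩

theorem exact_lTensor_iff' : Function.Exact (f.lTensor M) (g.lTensor M) ↔
    Function.Exact (f.rTensor M) (g.rTensor M) := by
  refine (Function.Exact.iff_of_ladder_linearEquiv (e₁ := TensorProduct.comm R M A) (e₂ := TensorProduct.comm R M B)
    (e₃ := TensorProduct.comm R M C) ?_ ?_).symm
  · ext; rfl
  · ext; rfl

theorem torV_iff (X N : ModuleCat.{0} R) (n : ℕ) :
    torV R X N (n+1) ↔ extV R N (ModuleCat.of R (CharacterModule X)) (n+1) := by
  let P := projectiveResolution N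
  have h0 : (P.complex.d (n+1) n).hom.comp (P.complex.d (n+2) (n+1)).hom = 0 := by
    rw [← ModuleCat.hom_comp, P.complex.d_comp_d]; rfl
  rw [torV_succ_iff_res X P, extV_succ_iff_res P, exact_lTensor_iff',
    exact_rTensor_iff h0]
  constructor
  · intro h f hf
    obtain ⟨v, hv⟩ := h f.hom (congrArg ModuleCat.Hom.hom hf)
    exact ⟨ModuleCat.ofHom v, by ext1; exact hv⟩
  · intro h f hf
    obtain ⟨v, hv⟩ := h (ModuleCat.ofHom f) (by ext1; exact hf)
    exact ⟨v.hom, congrArg ModuleCat.Hom.hom hv⟩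

theorem torV_iff_ev (X N : ModuleCat.{0} R) (n : ℕ) :
    torV R X N (n+1) ↔ ev R N (CharacterModule X) (n+1) := torV_iff X N n

theorem flatDimLE_iff (X : ModuleCat.{0} R) (n : ℕ) :
    flatDimLE R X n ↔ injDimLE R (ModuleCat.of R (CharacterModule X)) n := by
  refine forall_congr' fun N => forall_congr' fun j => ?_
  cases j with
  | zero => simp
  | succ j => rw [torV_iff]

theorem pureInj_char (R : Type) [CommRing R] (X : Type) [AddCommGroup X] [Module R X] :
    PureInjective R (CharacterModule X) := by
  intro A B _ _ _ _ f hf g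
  have := (LinearMap.lTensor_inj_iff_rTensor_inj X f).1 (hf.2 X)
  obtain ⟨h, hh⟩ := rTensor_injective_iff_lcomp_surjective.1 this g
  exact ⟨h, hh⟩

theorem char_inj (h : Module.Flat R B) : Module.Injective R (CharacterModule B) :=
  Module.Baer.injective (Module.Flat.iff_characterModule_baer.1 h)

theorem ev_char_one (h : SES f g) (hB : Module.Flat R B) :
    ev R M (CharacterModule C) 1 ↔ Function.Injective (f.lTensor M) := by
  rw [ev_iff_lift h.dual (char_inj hB), ← dual_surjective_iff_injective]
  have key : ∀ v : M →ₗ[R] CharacterModule B,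
      CharacterModule.dual (f.lTensor M) (homEquiv v) = homEquiv ((CharacterModule.dual f).comp v) := by
    intro v
    apply homEquiv.symm.injective
    rw [LinearEquiv.symm_apply_apply]
    rfl
  constructor
  · intro hh c
    obtain ⟨u, rfl⟩ := homEquiv.surjective c
    obtain ⟨v, hv⟩ := hh u
    exact ⟨homEquiv v, by rw [key, hv]⟩
  · intro hh u
    obtain ⟨c, hc⟩ := hh (homEquiv u)
    obtain ⟨v, rfl⟩ := homEquiv.surjective c
    exact ⟨v, homEquiv.injective (by rw [← key, hc])⟩

theorem ev_char_shift (h : SES f g) (hB : Module.Flat R B) (n : ℕ) :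
    ev R M (CharacterModule C) (n+2) ↔ ev R M (CharacterModule A) (n+1) :=
  ev_shift_r h.dual (char_inj hB) n

end CharMod


section FGRes

/-- bundled finitely generated module -/
structure FGM (A : Type) [CommRing A] where
  X : Type
  [ac : AddCommGroup X]
  [mod : Module A X]
  [fin : Module.Finite A X]

attribute [instance] FGM.ac FGM.mod FGM.fin

/-- f.g. free resolutions, cut into short exact sequences -/
structure FRes (A : Type) [CommRing A] (T : Type) [AddCommGroup T] [Module A T] where
  K : ℕ → Type
  [ac : ∀ i, AddCommGroup (K i)]
  [mod : ∀ i, Module A (K i)]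
  n : ℕ → ℕ
  pi : ∀ i, (Fin (n i) → A) →ₗ[A] K i
  incl : ∀ i, K (i+1) →ₗ[A] (Fin (n i) → A)
  ses : ∀ i, SES (incl i) (pi i)
  e : K 0 ≃ₗ[A] T

attribute [instance] FRes.ac FRes.mod

variable {A : Type} [CommRing A]

/-- rank of a free cover -/
def FGM.rk (T : FGM A) : ℕ := (Module.Finite.exists_fin' A T.X).choose
def FGM.pi (T : FGM A) : (Fin T.rk → A) →ₗ[A] T.X := (Module.Finite.exists_fin' A T.X).choose_spec.choose
theorem FGM.pi_surj (T : FGM A) : Function.Surjective T.pi :=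
  (Module.Finite.exists_fin' A T.X).choose_spec.choose_spec
def FGM.syz [IsNoetherianRing A] (T : FGM A) : FGM A := { X := LinearMap.ker T.pi }
def FGM.incl [IsNoetherianRing A] (T : FGM A) : T.syz.X →ₗ[A] (Fin T.rk → A) := (LinearMap.ker T.pi).subtype
theorem FGM.ses [IsNoetherianRing A] (T : FGM A) : SES T.incl T.pi := ses_ker T.pi_surj

/-- iterated syzygies -/
def FGM.sq [IsNoetherianRing A] (T : FGM A) : ℕ → FGM A
  | 0 => T
  | i+1 => (FGM.sq T i).syz

def mkFRes (A : Type) [CommRing A] [IsNoetherianRing A] (T : Type) [AddCommGroup T] [Module A T]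
    [Module.Finite A T] : FRes A T where
  K i := (FGM.sq ⟨T⟩ i).X
  n i := (FGM.sq ⟨T⟩ i).rk
  pi i := (FGM.sq ⟨T⟩ i).pi
  incl i := (FGM.sq ⟨T⟩ i).incl
  ses i := (FGM.sq ⟨T⟩ i).ses
  e := LinearEquiv.refl A T

theorem factor_surj {A B C N : Type} [CommRing A] [AddCommGroup B] [Module A B] [AddCommGroup C] [Module A C]
    [AddCommGroup N] [Module A N] {g : B →ₗ[A] C} (hg : Function.Surjective g) (u : B →ₗ[A] N)
    (h : ∀ x, g x = 0 → u x = 0) : ∃ w : C →ₗ[A] N, ∀ x, w (g x) = u x := by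
  refine ⟨((LinearMap.ker g).liftQ u h).comp (g.quotKerEquivOfSurjective hg).symm.toLinearMap, fun x => ?_⟩
  have : (g.quotKerEquivOfSurjective hg).symm (g x) = Submodule.Quotient.mk x := by
    rw [LinearEquiv.symm_apply_eq]; rfl
  rw [LinearMap.comp_apply, LinearEquiv.coe_coe, this]; rfl

namespace FRes
variable {T : Type} [AddCommGroup T] [Module A T] (F : FRes A T)
  (N : Type) [AddCommGroup N] [Module A N]

theorem pi_incl (i : ℕ) (x) : F.pi i (F.incl i x) = 0 := ((F.ses i).ex _).2 ⟨_, rfl⟩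

/-- differentials -/
def d (i : ℕ) : (Fin (F.n (i+1)) → A) →ₗ[A] (Fin (F.n i) → A) := (F.incl i).comp (F.pi (i+1))

theorem d_apply (i : ℕ) (x) : F.d i x = F.incl i (F.pi (i+1) x) := rfl

theorem ev_succ (n i : ℕ) :
    ev A T N (n+i+1) ↔ ev A (F.K i) N (n+1) := by
  induction i generalizing n with
  | zero => exact (ev_congr F.e).symm
  | succ i ih =>
    have := ih (n+1)
    rw [show n + (i+1) + 1 = n+1+i+1 by omega, this]
    exact ev_shift_l (F.ses i) n

theorem ev_extend (i : ℕ) :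
    ev A T N (i+1) ↔ ∀ u : F.K (i+1) →ₗ[A] N, ∃ v : (Fin (F.n i) → A) →ₗ[A] N, v.comp (F.incl i) = u := by
  have := F.ev_succ N 0 i
  rw [zero_add] at this
  rw [this]
  exact ev_iff_extend (F.ses i)

theorem ker_d (i : ℕ) (u : (Fin (F.n i) → A) →ₗ[A] N) (hu : (F.d i).lcomp A N u = 0) :
    ∃ w : F.K i →ₗ[A] N, ∀ x, w (F.pi i x) = u x := by
  refine factor_surj (F.ses i).surj u fun x hx => ?_
  obtain ⟨z, rfl⟩ := ((F.ses i).ex x).1 hx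
  obtain ⟨y, rfl⟩ := (F.ses (i+1)).surj z
  exact LinearMap.congr_fun hu y

theorem ev_exact (i : ℕ) :
    ev A T N (i+1) ↔ Function.Exact ((F.d i).lcomp A N) ((F.d (i+1)).lcomp A N) := by
  rw [F.ev_extend]
  constructor
  · intro h u
    constructor
    · intro hu
      obtain ⟨w, hw⟩ := F.ker_d N (i+1) u hu
      obtain ⟨v, hv⟩ := h w
      refine ⟨v, LinearMap.ext fun x => ?_⟩
      rw [LinearMap.lcomp_apply, d_apply, ← hw, ← hv]; rfl
    · rintro ⟨v, rfl⟩
      refine LinearMap.ext fun x => ?_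
      rw [LinearMap.lcomp_apply, LinearMap.lcomp_apply, d_apply, d_apply, pi_incl]; simp
  · intro h u
    obtain ⟨v, hv⟩ := (h (u.comp (F.pi (i+1)))).1 (by
      refine LinearMap.ext fun x => ?_
      rw [LinearMap.lcomp_apply, d_apply, LinearMap.comp_apply, pi_incl]; simp)
    refine ⟨v, LinearMap.ext fun x => ?_⟩
    obtain ⟨y, rfl⟩ := (F.ses (i+1)).surj x
    exact LinearMap.congr_fun hv y

theorem ev_zero_hom : ev A T N 0 ↔ ∀ u : F.K 0 →ₗ[A] N, u = 0 := by
  rw [← ev_congr F.e, ev_zero_iff]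

theorem ev_zero :
    ev A T N 0 ↔ Function.Injective ((F.d 0).lcomp A N) := by
  rw [ev_zero_hom F, injective_iff_map_eq_zero]
  constructor
  · intro h u hu
    obtain ⟨w, hw⟩ := F.ker_d N 0 u hu
    refine LinearMap.ext fun x => ?_
    rw [← hw, h w]; rfl
  · intro h u
    have := h (u.comp (F.pi 0)) (by
      refine LinearMap.ext fun x => ?_
      rw [LinearMap.lcomp_apply, d_apply, LinearMap.comp_apply, pi_incl]; simp)
    refine LinearMap.ext fun x => ?_
    obtain ⟨y, rfl⟩ := (F.ses 0).surj x
    exact LinearMap.congr_fun this y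

theorem homotopy (a : A) (ha : ∀ x : T, a • x = 0) (i : ℕ) :
    ∃ g : (Fin (F.n i) → A) →ₗ[A] F.K (i+1), ∀ x, g (F.incl i x) = a • x := by
  have key : ∀ i (w : (Fin (F.n i) → A) →ₗ[A] (Fin (F.n i) → A)) (_ : ∀ x, F.pi i (w x) = 0)
      (_ : ∀ x, w (F.incl i x) = a • F.incl i x),
      ∃ g : (Fin (F.n i) → A) →ₗ[A] F.K (i+1), ∀ x, g (F.incl i x) = a • x := by
    intro i w h1 h2
    let e := LinearEquiv.ofInjective (F.incl i) (F.ses i).inj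
    refine ⟨e.symm.toLinearMap.comp (w.codRestrict (LinearMap.range (F.incl i))
      fun x => ((F.ses i).ex _).1 (h1 x)), fun x => ?_⟩
    rw [LinearMap.comp_apply, LinearEquiv.coe_coe, LinearEquiv.symm_apply_eq]
    apply Subtype.ext
    simp only [map_smul]
    exact h2 x
  induction i with
  | zero =>
    refine key 0 (a • LinearMap.id) (fun x => F.e.injective ?_) fun x => rfl
    rw [LinearMap.smul_apply, map_smul, map_smul, ha, map_zero]
  | succ i ih =>
    obtain ⟨g, hg⟩ := ih
    obtain ⟨h, hh⟩ := Module.projective_lifting_property (F.pi (i+1)) g (F.ses (i+1)).surj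
    refine key (i+1) (a • LinearMap.id - h.comp ((F.incl i).comp (F.pi (i+1)))) (fun x => ?_) fun x => ?_
    · have := LinearMap.congr_fun hh (F.incl i (F.pi (i+1) x))
      rw [LinearMap.comp_apply, hg] at this
      simp only [LinearMap.sub_apply, map_sub, LinearMap.comp_apply, this]
      simp
    · simp [pi_incl]

end FRes

end FGRes


section Core1

/-- formal vanishing system -/
structure VSys (A : Type) [CommRing A] where
  V : ℕ → ∀ (N : Type) [AddCommGroup N] [Module A N], Prop
  c1 : ∀ {X Y Z : Type} [AddCommGroup X] [Module A X] [AddCommGroup Y] [Module A Y] [AddCommGroup Z]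
    [Module A Z] {f : X →ₗ[A] Y} {g : Y →ₗ[A] Z} (_ : SES f g) {n : ℕ}, V n X → V n Z → V n Y
  c2 : ∀ {X Y Z : Type} [AddCommGroup X] [Module A X] [AddCommGroup Y] [Module A Y] [AddCommGroup Z]
    [Module A Z] {f : X →ₗ[A] Y} {g : Y →ₗ[A] Z} (_ : SES f g) {n : ℕ}, V n Y → V (n+1) Z → V n X
  c3 : ∀ {X Y Z : Type} [AddCommGroup X] [Module A X] [AddCommGroup Y] [Module A Y] [AddCommGroup Z]
    [Module A Z] {f : X →ₗ[A] Y} {g : Y →ₗ[A] Z} (_ : SES f g) {n : ℕ}, V n X → V (n+1) Y → V (n+1) Z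
  ret : ∀ {X Y : Type} [AddCommGroup X] [Module A X] [AddCommGroup Y] [Module A Y] (i : X →ₗ[A] Y)
    (r : Y →ₗ[A] X), r.comp i = LinearMap.id → ∀ {n : ℕ}, V n Y → V n X
  fs : ∀ (ι : Type) {X : Type} [AddCommGroup X] [Module A X] {n : ℕ}, V (n+1) X → V (n+1) (ι →₀ X)
  triv : ∀ {X : Type} [AddCommGroup X] [Module A X] [Subsingleton X] (n : ℕ), V n X

/-- Ext vanishing against an R-module, restricted to A-modules -/
def extSys (R A : Type) [CommRing R] [CommRing A] [Algebra R A] (X : Type) [AddCommGroup X] [Module R X] :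
    VSys A where
  V n N _ _ := letI := Module.compHom N (algebraMap R A); ev R N X n
  c1 {P Q S} _ _ _ _ _ _ {f g} h {n} := by
    letI := Module.compHom P (algebraMap R A); letI := Module.compHom Q (algebraMap R A)
    letI := Module.compHom S (algebraMap R A)
    haveI : IsScalarTower R A P := IsScalarTower.of_algebraMap_smul fun _ _ => rfl
    haveI : IsScalarTower R A Q := IsScalarTower.of_algebraMap_smul fun _ _ => rfl
    haveI : IsScalarTower R A S := IsScalarTower.of_algebraMap_smul fun _ _ => rfl
    exact ev_c1 (f := f.restrictScalars R) (g := g.restrictScalars R) ⟨h.inj, h.ex, h.surj⟩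
  c2 {P Q S} _ _ _ _ _ _ {f g} h {n} := by
    letI := Module.compHom P (algebraMap R A); letI := Module.compHom Q (algebraMap R A)
    letI := Module.compHom S (algebraMap R A)
    haveI : IsScalarTower R A P := IsScalarTower.of_algebraMap_smul fun _ _ => rfl
    haveI : IsScalarTower R A Q := IsScalarTower.of_algebraMap_smul fun _ _ => rfl
    haveI : IsScalarTower R A S := IsScalarTower.of_algebraMap_smul fun _ _ => rfl
    exact ev_c2 (f := f.restrictScalars R) (g := g.restrictScalars R) ⟨h.inj, h.ex, h.surj⟩
  c3 {P Q S} _ _ _ _ _ _ {f g} h {n} := by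
    letI := Module.compHom P (algebraMap R A); letI := Module.compHom Q (algebraMap R A)
    letI := Module.compHom S (algebraMap R A)
    haveI : IsScalarTower R A P := IsScalarTower.of_algebraMap_smul fun _ _ => rfl
    haveI : IsScalarTower R A Q := IsScalarTower.of_algebraMap_smul fun _ _ => rfl
    haveI : IsScalarTower R A S := IsScalarTower.of_algebraMap_smul fun _ _ => rfl
    exact ev_c3 (f := f.restrictScalars R) (g := g.restrictScalars R) ⟨h.inj, h.ex, h.surj⟩
  ret {P Q} _ _ _ _ i r h {n} := by
    letI := Module.compHom P (algebraMap R A); letI := Module.compHom Q (algebraMap R A)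
    haveI : IsScalarTower R A P := IsScalarTower.of_algebraMap_smul fun _ _ => rfl
    haveI : IsScalarTower R A Q := IsScalarTower.of_algebraMap_smul fun _ _ => rfl
    exact ev_retract (i.restrictScalars R) (r.restrictScalars R)
      (LinearMap.ext fun x => LinearMap.congr_fun h x)
  fs ι P _ _ {n} h := by
    letI := Module.compHom P (algebraMap R A)
    exact ev_finsupp_all ι h
  triv {P} _ _ _ n := by
    letI := Module.compHom P (algebraMap R A)
    exact ev_subsingleton n

theorem extSys_iff {R A : Type} [CommRing R] [CommRing A] [Algebra R A] (X : Type) [AddCommGroup X]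
    [Module R X] (N : Type) [AddCommGroup N] [Module A N] [i : Module R N] [IsScalarTower R A N] (n : ℕ) :
    (extSys R A X).V n N ↔ ev R N X n := by
  have : i = Module.compHom N (algebraMap R A) := by
    ext r x; exact (IsScalarTower.algebraMap_smul A r x).symm
  subst this
  rfl

theorem vec_of_killed {A : Type} [CommRing A] [IsLocalRing A] {L : Type} [AddCommGroup L] [Module A L]
    (h : ∀ a ∈ IsLocalRing.maximalIdeal A, ∀ x : L, a • x = 0) :
    ∃ ι : Type, Nonempty (L ≃ₗ[A] (ι →₀ IsLocalRing.ResidueField A)) := by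
  letI : Module (A ⧸ IsLocalRing.maximalIdeal A) L :=
    Module.IsTorsionBySet.module (I := IsLocalRing.maximalIdeal A) (fun x a => h a a.2 x)
  letI : Module (IsLocalRing.ResidueField A) L := this
  haveI : IsScalarTower A (IsLocalRing.ResidueField A) L :=
    Module.IsTorsionBySet.isScalarTower (I := IsLocalRing.maximalIdeal A) (fun x a => h a a.2 x)
  let b := Module.Free.chooseBasis (IsLocalRing.ResidueField A) L
  exact ⟨_, ⟨b.repr.restrictScalars A⟩⟩

variable {A : Type} [CommRing A] [IsLocalRing A] (S : VSys A)

theorem VSys.of_killed {L : Type} [AddCommGroup L] [Module A L]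
    (h : ∀ a ∈ IsLocalRing.maximalIdeal A, ∀ x : L, a • x = 0) {n : ℕ}
    (hk : S.V (n+1) (IsLocalRing.ResidueField A)) : S.V (n+1) L := by
  obtain ⟨ι, ⟨e⟩⟩ := vec_of_killed h
  exact S.ret e.toLinearMap e.symm.toLinearMap (by ext; simp) (S.fs ι hk)

theorem VSys.k_of_killed {L : Type} [AddCommGroup L] [Module A L] [Nontrivial L]
    (h : ∀ a ∈ IsLocalRing.maximalIdeal A, ∀ x : L, a • x = 0) {n : ℕ}
    (hk : S.V n L) : S.V n (IsLocalRing.ResidueField A) := by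
  obtain ⟨ι, ⟨e⟩⟩ := vec_of_killed h
  have : Nonempty ι := by
    by_contra hn
    rw [not_nonempty_iff] at hn
    exact not_subsingleton L e.toEquiv.subsingleton
  obtain ⟨i⟩ := this
  refine S.ret (Y := L) (e.symm.toLinearMap.comp (Finsupp.lsingle i)) ((Finsupp.lapply i).comp e.toLinearMap) ?_ hk
  ext; simp

theorem VSys.pow {M : Type} [AddCommGroup M] [Module A M] {n : ℕ} (h : S.V (n+1) M) (a : ℕ) :
    S.V (n+1) ((Fin a → A) →ₗ[A] M) := by
  let e : ((Fin a → A) →ₗ[A] M) ≃ₗ[A] (Fin a →₀ M) :=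
    ((Pi.basisFun A (Fin a)).constr A).symm.trans (Finsupp.linearEquivFunOnFinite A M (Fin a)).symm
  exact S.ret e.toLinearMap e.symm.toLinearMap (by ext; simp) (S.fs (Fin a) h)

theorem core1 [IsNoetherianRing A] {d : ℕ}
    (hd : ∀ j > d, ∀ (N : Type) [AddCommGroup N] [Module A N], S.V j N)
    {M : Type} [AddCommGroup M] [Module A M] (hM : ∀ j, S.V (j+1) M) {m : ℕ}
    (hm : ¬ ev A (IsLocalRing.ResidueField A) M m) :
    ∀ j > m, S.V j (IsLocalRing.ResidueField A) := by
  classical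
  let k := IsLocalRing.ResidueField A
  obtain ⟨m0, hm0, hmin⟩ : ∃ m0, ¬ ev A k M m0 ∧ ∀ i < m0, ev A k M i :=
    have hex : ∃ m, ¬ ev A k M m := ⟨m, hm⟩
    ⟨Nat.find hex, Nat.find_spec hex, fun i hi => not_not.1 (Nat.find_min hex hi)⟩
  have hle : m0 ≤ m := by
    by_contra h
    exact hm (hmin m (by omega))
  suffices ∀ j > m0, S.V j k from fun j hj => this j (by omega)
  -- downward induction
  have main : ∀ s, m0 < s → (∀ j > s, S.V j k) → S.V s k := by
    intro s hs hsk
    let F := mkFRes A k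
    let π : ∀ i, (F.K i →ₗ[A] M) →ₗ[A] ((Fin (F.n i) → A) →ₗ[A] M) := fun i => (F.pi i).lcomp A M
    let ι : ∀ i, ((Fin (F.n i) → A) →ₗ[A] M) →ₗ[A] (F.K (i+1) →ₗ[A] M) := fun i => (F.incl i).lcomp A M
    have hP : ∀ i j, S.V (j+1) ((Fin (F.n i) → A) →ₗ[A] M) := fun i j => S.pow (hM j) _
    have s1 : ∀ i, SES (π i) (ι i).rangeRestrict := by
      intro i
      refine ⟨?_, ?_, (ι i).surjective_rangeRestrict⟩
      · intro u v huv
        refine LinearMap.ext fun x => ?_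
        obtain ⟨y, rfl⟩ := (F.ses i).surj x
        exact LinearMap.congr_fun huv y
      · intro u
        constructor
        · intro hu
          have hu' : ι i u = 0 := congrArg Subtype.val hu
          obtain ⟨w, hw⟩ := factor_surj (F.ses i).surj u (fun x hx => by
            obtain ⟨z, rfl⟩ := ((F.ses i).ex x).1 hx
            exact LinearMap.congr_fun hu' z)
          exact ⟨w, LinearMap.ext hw⟩
        · rintro ⟨w, rfl⟩
          apply Subtype.ext
          refine LinearMap.ext fun x => ?_
          change w (F.pi i (F.incl i x)) = 0
          rw [F.pi_incl, map_zero]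
    have s2 : ∀ i, SES (LinearMap.range (ι i)).subtype (LinearMap.range (ι i)).mkQ := fun i => ses_sub _
    have hkk : ∀ a ∈ IsLocalRing.maximalIdeal A, ∀ x : k, a • x = 0 := by
      intro a ha x
      obtain ⟨y, rfl⟩ := IsLocalRing.residue_surjective x
      rw [← IsLocalRing.ResidueField.algebraMap_eq, ← algebraMap_smul (IsLocalRing.ResidueField A) a, 
        IsLocalRing.ResidueField.algebraMap_eq, (IsLocalRing.residue_eq_zero_iff a).2 ha, zero_smul]
    have kill : ∀ i, ∀ a ∈ IsLocalRing.maximalIdeal A,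
        ∀ x : (F.K (i+1) →ₗ[A] M) ⧸ LinearMap.range (ι i), a • x = 0 := by
      intro i a ha x
      obtain ⟨u, rfl⟩ := Submodule.mkQ_surjective _ x
      obtain ⟨g, hg⟩ := F.homotopy a (hkk a ha) i
      rw [← map_smul, Submodule.mkQ_apply, Submodule.Quotient.mk_eq_zero]
      refine ⟨u.comp g, LinearMap.ext fun y => ?_⟩
      change u (g (F.incl i y)) = a • u y
      rw [hg, map_smul]
    have claimA : ∀ t j, d < j + t → s ≤ j → ∀ i, S.V j (F.K i →ₗ[A] M) := by
      intro t
      induction t with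
      | zero => intro j hj _ i; exact hd j hj _
      | succ t ih =>
        intro j hj hsj i
        have h1 := ih (j+1) (by omega) (by omega) (i+1)
        have h2 : S.V (j+2) ((F.K (i+1) →ₗ[A] M) ⧸ LinearMap.range (ι i)) :=
          S.of_killed (kill i) (hsk _ (by omega))
        have h3 := S.c2 (s2 i) h1 h2
        obtain ⟨j', rfl⟩ : ∃ j', j = j'+1 := ⟨j-1, by omega⟩
        exact S.c2 (s1 i) (hP i j') h3
    have hA : ∀ i, S.V s (F.K i →ₗ[A] M) := fun i => claimA (d+1) s (by omega) le_rfl i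
    have claimB : ∀ i, i < m0 → ∀ j, i ≤ j → S.V j (F.K i →ₗ[A] M) := by
      intro i
      induction i with
      | zero =>
        intro hi j _
        have h0 := (F.ev_zero_hom M).1 (hmin 0 hi)
        haveI : Subsingleton (F.K 0 →ₗ[A] M) := subsingleton_of_forall_eq 0 h0
        exact S.triv j
      | succ i ih =>
        intro hi j hj
        obtain ⟨j', rfl⟩ : ∃ j', j = j'+1 := ⟨j-1, by omega⟩
        have h1 := ih (by omega) j' (by omega)
        have h2 := S.c3 (s1 i) h1 (hP i j')
        refine S.c1 (s2 i) h2 ?_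
        have h3 := (F.ev_extend M i).1 (hmin _ hi)
        have h4 : LinearMap.range (ι i) = ⊤ := LinearMap.range_eq_top.2 h3
        haveI : Subsingleton ((F.K (i+1) →ₗ[A] M) ⧸ LinearMap.range (ι i)) := by
          rw [Submodule.Quotient.subsingleton_iff]; exact h4
        exact S.triv _
    rcases m0 with _ | i
    · haveI : Nontrivial (F.K 0 →ₗ[A] M) := by
        by_contra hn
        rw [not_nontrivial_iff_subsingleton] at hn
        exact hm0 ((F.ev_zero_hom M).2 fun u => hn.elim _ _)
      refine S.k_of_killed ?_ (hA 0)
      intro a ha u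
      refine LinearMap.ext fun x => ?_
      rw [LinearMap.smul_apply, ← map_smul]
      have : a • x = 0 := F.e.injective (by rw [map_smul, hkk a ha, map_zero])
      rw [this, map_zero]; rfl
    · obtain ⟨s', rfl⟩ : ∃ s', s = s'+2 := ⟨s-2, by omega⟩
      have h1 := claimB i (by omega) s' (by omega)
      have h2 := S.c3 (s1 i) h1 (hP i s')
      have h3 := S.c3 (s2 i) h2 (hA (i+1))
      haveI : Nontrivial ((F.K (i+1) →ₗ[A] M) ⧸ LinearMap.range (ι i)) := by
        rw [Submodule.Quotient.nontrivial_iff]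
        intro h4
        exact hm0 ((F.ev_extend M i).2 (LinearMap.range_eq_top.1 h4))
      exact S.k_of_killed (kill i) h3
  have desc : ∀ t j, d < j + t → m0 < j → S.V j k := by
    intro t
    induction t with
    | zero => intro j hj _; exact hd j hj _
    | succ t ih =>
      intro j hj hj2
      refine main j hj2 ?_
      intro j' hj'
      exact ih j' (by omega) (by omega)
  intro j hj
  exact desc (d+1) j (by omega) hj

end Core1


section PureInjSec
open TensorProduct
variable {R : Type} [CommRing R]

theorem inj_of_ev {N : Type} [AddCommGroup N] [Module R N]
    (h : ∀ (M : Type) [AddCommGroup M] [Module R M], ev R M N 1) : Module.Injective R N := by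
  apply Module.Baer.injective
  intro I g
  obtain ⟨v, hv⟩ := ev_extend (ses_sub I) (h (R ⧸ I)) g
  exact ⟨v, fun x hx => LinearMap.congr_fun hv ⟨x, hx⟩⟩

theorem flat_of_char_inj {N : Type} [AddCommGroup N] [Module R N]
    (h : Module.Injective R (CharacterModule N)) : Module.Flat R N :=
  Module.Flat.iff_characterModule_injective.2 h

theorem flat_syz {A B C : Type} [AddCommGroup A] [Module R A] [AddCommGroup B] [Module R B]
    [AddCommGroup C] [Module R C] {f : A →ₗ[R] B} {g : B →ₗ[R] C} (h : SES f g) (hB : Module.Flat R B)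
    (hC : Module.Flat R C) : Module.Flat R A := by
  apply flat_of_char_inj
  apply inj_of_ev
  intro M _ _
  exact (ev_char_shift h hB 0).1 (ev_inj (char_inj hC) 1)

theorem pure_of_flat {A B C : Type} [AddCommGroup A] [Module R A] [AddCommGroup B] [Module R B]
    [AddCommGroup C] [Module R C] {f : A →ₗ[R] B} {g : B →ₗ[R] C} (h : SES f g) (hB : Module.Flat R B)
    (hC : Module.Flat R C) (Q : Type) [AddCommGroup Q] [Module R Q] : Function.Injective (f.lTensor Q) :=
  (ev_char_one h hB).1 (ev_inj (char_inj hC) 0)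

variable {X : Type} [AddCommGroup X] [Module R X] (hX : PureInjective R X)

include hX in
theorem ev_flat_pure (j : ℕ) (F : Type) [AddCommGroup F] [Module R F] (hF : Module.Flat R F) :
    ev R F X (j+1) := by
  induction j generalizing F with
  | zero =>
    refine ev_of_extend (ses_syz R F) (ev_proj 0) fun u => ?_
    exact hX (Syz R F) (Fr R F) (LinearMap.ker (frMap R F)).subtype ⟨(ses_syz R F).inj, fun Q _ _ => pure_of_flat (ses_syz R F) inferInstance hF Q⟩ u
  | succ j ih =>
    rw [ev_shift_l (ses_syz R F)]
    exact ih (Syz R F) (flat_syz (ses_syz R F) inferInstance hF)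

theorem ses_lTensor {A B C : Type} [AddCommGroup A] [Module R A] [AddCommGroup B] [Module R B]
    [AddCommGroup C] [Module R C] {f : A →ₗ[R] B} {g : B →ₗ[R] C} (h : SES f g)
    (Q : Type) [AddCommGroup Q] [Module R Q] (hi : Function.Injective (f.lTensor Q)) :
    SES (f.lTensor Q) (g.lTensor Q) :=
  ⟨hi, lTensor_exact Q h.ex h.surj, LinearMap.lTensor_surjective Q h.surj⟩

theorem ses_rTensor {A B C : Type} [AddCommGroup A] [Module R A] [AddCommGroup B] [Module R B]
    [AddCommGroup C] [Module R C] {f : A →ₗ[R] B} {g : B →ₗ[R] C} (h : SES f g)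
    (Q : Type) [AddCommGroup Q] [Module R Q] (hi : Function.Injective (f.rTensor Q)) :
    SES (f.rTensor Q) (g.rTensor Q) :=
  ⟨hi, rTensor_exact Q h.ex h.surj, LinearMap.rTensor_surjective Q h.surj⟩

include hX in
theorem ev_tensor_flat_step {A B C : Type} [AddCommGroup A] [Module R A] [AddCommGroup B] [Module R B]
    [AddCommGroup C] [Module R C] {f : A →ₗ[R] B} {g : B →ₗ[R] C} (h : SES f g) [Module.Free R B]
    (F : Type) [AddCommGroup F] [Module R F] (hF : Module.Flat R F) {j : ℕ}
    (hA : ev R (A ⊗[R] F) X (j+1)) : ev R (C ⊗[R] F) X (j+1+1) :=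
  ev_c3 (ses_rTensor h F (Module.Flat.rTensor_preserves_injective_linearMap _ h.inj)) hA
    (ev_flat_pure hX (j+1) (B ⊗[R] F) inferInstance)

include hX in
theorem ev_tensor_flat (j : ℕ) (M : Type) [AddCommGroup M] [Module R M] (hM : ∀ j, ev R M X (j+1))
    (F : Type) [AddCommGroup F] [Module R F] (hF : Module.Flat R F) :
    ev R (M ⊗[R] F) X (j+1) := by
  induction j generalizing M with
  | zero =>
    classical
    have hp := fun (Q : Type) (_ : AddCommGroup Q) (_ : Module R Q) =>
      pure_of_flat (ses_syz R F) inferInstance hF Q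
    refine ev_of_extend (ses_lTensor (ses_syz R F) M (hp M _ _)) ?_ fun u => ?_
    · exact (ev_congr (TensorProduct.finsuppRight R R M R F ≪≫ₗ
        Finsupp.mapRange.linearEquiv (TensorProduct.rid R M))).2 (ev_finsupp F (hM 0))
    · refine hX (M ⊗[R] Syz R F) (M ⊗[R] Fr R F) ((LinearMap.ker (frMap R F)).subtype.lTensor M) ⟨hp M _ _, fun Q _ _ => ?_⟩ u
      have := hp (Q ⊗[R] M) inferInstance inferInstance
      rw [LinearMap.lTensor_tensor] at this
      simpa using this
  | succ j ih =>
    refine ev_tensor_flat_step hX (ses_syz R M) F hF (ih (Syz R M) fun i => ?_)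
    rw [← ev_shift_l (ses_syz R M)]
    exact hM (i+1)

include hX in
theorem ev_localized (S : Submonoid R) (M : Type) [AddCommGroup M] [Module R M] (hM : ∀ j, ev R M X (j+1))
    (j : ℕ) : ev R (LocalizedModule S M) X (j+1) := by
  have hF : Module.Flat R (Localization S) := IsLocalization.flat (Localization S) S
  have h1 := ev_tensor_flat hX j M hM (Localization S) hF
  let e : LocalizedModule S M ≃ₗ[R] M ⊗[R] (Localization S) :=
    (LocalizedModule.equivTensorProduct S M).restrictScalars R ≪≫ₗ TensorProduct.comm R _ _
  exact (ev_congr e).2 h1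

include hX in
theorem core1' [IsNoetherianRing R] {d : ℕ} (hd : ∀ (N : Type) [AddCommGroup N] [Module R N], ∀ j > d, ev R N X j)
    (p : PrimeSpectrum R) (M : Type) [AddCommGroup M] [Module R M] (hM : ∀ j, ev R M X (j+1)) {m : ℕ}
    (hm : ¬ ev (Localization.AtPrime p.asIdeal) (IsLocalRing.ResidueField (Localization.AtPrime p.asIdeal))
      (LocalizedModule p.asIdeal.primeCompl M) m) (j : ℕ) (hj : m < j) :
    ev R (IsLocalRing.ResidueField (Localization.AtPrime p.asIdeal)) X j := by
  let A := Localization.AtPrime p.asIdeal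
  rw [← extSys_iff (A := A)]
  refine core1 (extSys R A X) (d := d) (fun j hj N _ _ => ?_) (M := LocalizedModule p.asIdeal.primeCompl M) (fun j => ?_) hm j hj
  · letI := Module.compHom N (algebraMap R A)
    haveI : IsScalarTower R A N := IsScalarTower.of_algebraMap_smul fun _ _ => rfl
    rw [extSys_iff]
    exact hd N j hj
  · rw [extSys_iff]
    exact ev_localized hX _ M hM j

end PureInjSec


section DepthSec
variable {R : Type} [CommRing R]

/-- vanishing of Ext from the residue field, local version -/
def dv (R : Type) [CommRing R] (p : PrimeSpectrum R) (M : Type) [AddCommGroup M] [Module R M] (i : ℕ) : Prop :=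
  ev (Localization.AtPrime p.asIdeal) (IsLocalRing.ResidueField (Localization.AtPrime p.asIdeal))
      (LocalizedModule p.asIdeal.primeCompl M) i

theorem le_rdepth (A : Type) [CommRing A] [IsLocalRing A] (M : Type) [AddCommGroup M] [Module A M] (n : ℕ) :
    (n : ℕ∞) ≤ rdepth A M ↔ ∀ i < n, ev A (IsLocalRing.ResidueField A) M i := by
  unfold rdepth
  rw [le_sInf_iff]
  constructor
  · intro h i hi
    by_contra hc
    have := h i ⟨i, rfl, hc⟩
    exact absurd (Nat.cast_le.1 this) (not_le.2 hi)
  · rintro h _ ⟨i, rfl, hi⟩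
    rw [Nat.cast_le]
    by_contra hc
    exact hi (h i (not_le.1 hc))

theorem le_depthAt (p : PrimeSpectrum R) (M : Type) [AddCommGroup M] [Module R M] (n : ℕ) :
    (n : ℕ∞) ≤ depthAt R p M ↔ ∀ i < n, dv R p M i := le_rdepth _ _ _

theorem SES.loc (S : Submonoid R) {A B C : Type} [AddCommGroup A] [Module R A] [AddCommGroup B] [Module R B]
    [AddCommGroup C] [Module R C] {f : A →ₗ[R] B} {g : B →ₗ[R] C} (h : SES f g) :
    SES (LocalizedModule.map S f) (LocalizedModule.map S g) :=
  ⟨LocalizedModule.map_injective S f h.inj, LocalizedModule.map_exact S f g h.ex,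
    LocalizedModule.map_surjective S g h.surj⟩

theorem dv_k1 (p : PrimeSpectrum R) {A B C : Type} [AddCommGroup A] [Module R A] [AddCommGroup B] [Module R B]
    [AddCommGroup C] [Module R C] {f : A →ₗ[R] B} {g : B →ₗ[R] C} (h : SES f g) {n : ℕ}
    (h1 : dv R p A n) (h2 : dv R p C n) : dv R p B n := ev_k1 (h.loc _) h1 h2
theorem dv_k2 (p : PrimeSpectrum R) {A B C : Type} [AddCommGroup A] [Module R A] [AddCommGroup B] [Module R B]
    [AddCommGroup C] [Module R C] {f : A →ₗ[R] B} {g : B →ₗ[R] C} (h : SES f g) {n : ℕ}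
    (h1 : dv R p C n) (h2 : dv R p B (n+1)) : dv R p A (n+1) := ev_k2 (h.loc _) h1 h2
theorem dv_k3 (p : PrimeSpectrum R) {A B C : Type} [AddCommGroup A] [Module R A] [AddCommGroup B] [Module R B]
    [AddCommGroup C] [Module R C] {f : A →ₗ[R] B} {g : B →ₗ[R] C} (h : SES f g) {n : ℕ}
    (h1 : dv R p B n) (h2 : dv R p A (n+1)) : dv R p C n := ev_k3 (h.loc _) h1 h2

/-- the localization as an LinearEquiv from an equiv -/
theorem dv_congr (p : PrimeSpectrum R) {A B : Type} [AddCommGroup A] [Module R A] [AddCommGroup B] [Module R B]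
    (e : A ≃ₗ[R] B) {n : ℕ} : dv R p A n ↔ dv R p B n := by
  have h1 : LocalizedModule.map p.asIdeal.primeCompl e.symm.toLinearMap ∘ₗ
      LocalizedModule.map p.asIdeal.primeCompl e.toLinearMap = LinearMap.id := by
    ext x
    induction x using LocalizedModule.induction_on with | h m s => simp [LocalizedModule.map_mk]
  have h2 : LocalizedModule.map p.asIdeal.primeCompl e.toLinearMap ∘ₗ
      LocalizedModule.map p.asIdeal.primeCompl e.symm.toLinearMap = LinearMap.id := by
    ext x
    induction x using LocalizedModule.induction_on with | h m s => simp [LocalizedModule.map_mk]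
  exact ⟨ev_retract' _ _ h2, ev_retract' _ _ h1⟩

theorem dv_inj [IsNoetherianRing R] (p : PrimeSpectrum R) {M : Type} [AddCommGroup M] [Module R M]
    (h : Module.Injective R M) (n : ℕ) : dv R p M (n+1) := by
  apply ev_inj
  exact Module.injective_of_isLocalizedModule p.asIdeal.primeCompl
    (LocalizedModule.mkLinearMap p.asIdeal.primeCompl M)

theorem res_hom {A : Type} [CommRing A] [IsLocalRing A] {M : Type} [AddCommGroup M] [Module A M] :
    ev A (IsLocalRing.ResidueField A) M 0 ↔
    ∀ y : M, (∀ a ∈ IsLocalRing.maximalIdeal A, a • y = 0) → y = 0 := by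
  rw [ev_zero_iff]
  constructor
  · intro h y hy
    have := h ((IsLocalRing.maximalIdeal A).liftQ (LinearMap.toSpanSingleton A M y) hy)
    have h2 := LinearMap.congr_fun this (Submodule.Quotient.mk 1)
    exact (one_smul A y).symm.trans h2
  · intro h f
    ext x
    obtain ⟨a, rfl⟩ := IsLocalRing.residue_surjective x
    have h1 : f 1 = 0 := h _ fun a ha => by
      rw [← map_smul, Algebra.smul_def, mul_one]
      have : algebraMap A (IsLocalRing.ResidueField A) a = 0 := by
        rw [IsLocalRing.ResidueField.algebraMap_eq]; exact (IsLocalRing.residue_eq_zero_iff a).2 ha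
      rw [this, map_zero]
    have : IsLocalRing.residue A a = a • (1 : IsLocalRing.ResidueField A) := by
      rw [Algebra.smul_def, mul_one]; rfl
    rw [this, map_smul, h1]; simp

theorem exists_ann [IsNoetherianRing R] (p : PrimeSpectrum R) {M : Type} [AddCommGroup M] [Module R M]
    (y : LocalizedModule p.asIdeal.primeCompl M) (hy : y ≠ 0) (hp : ∀ a ∈ p.asIdeal, a • y = 0) :
    ∃ (z : M) (s : R), s ∉ p.asIdeal ∧ s • y = LocalizedModule.mkLinearMap p.asIdeal.primeCompl M z ∧
      ∀ a, a • z = 0 ↔ a ∈ p.asIdeal := by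
  obtain ⟨⟨m, s⟩, hms⟩ := IsLocalizedModule.surj p.asIdeal.primeCompl (LocalizedModule.mkLinearMap p.asIdeal.primeCompl M) y
  dsimp only at hms
  have h1 : ∀ a ∈ p.asIdeal, ∃ c : R, c ∉ p.asIdeal ∧ c • a • m = 0 := by
    intro a ha
    have : LocalizedModule.mkLinearMap p.asIdeal.primeCompl M (a • m) = LocalizedModule.mkLinearMap p.asIdeal.primeCompl M 0 := by
      rw [map_smul, ← hms, map_zero, smul_comm, hp a ha, smul_zero]
    obtain ⟨c, hc⟩ := (IsLocalizedModule.eq_iff_exists p.asIdeal.primeCompl _).1 this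
    exact ⟨c, c.2, hc.trans (smul_zero c)⟩
  obtain ⟨T, hT⟩ := (inferInstance : IsNoetherian R R).noetherian p.asIdeal
  choose! c hc1 hc2 using h1
  have hmem : ∀ a ∈ T, a ∈ p.asIdeal := fun a ha => hT ▸ Submodule.subset_span ha
  let t := ∏ a ∈ T, c a
  have ht : t ∉ p.asIdeal := fun h => by
    obtain ⟨a, ha, h⟩ := (Ideal.IsPrime.prod_mem_iff (hp := p.2)).1 h
    exact hc1 a (hmem a ha) h
  have hz : ∀ a ∈ p.asIdeal, a • t • m = 0 := by
    have : p.asIdeal ≤ LinearMap.ker (LinearMap.toSpanSingleton R M (t • m)) := by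
      rw [← hT, Submodule.span_le]
      intro a ha
      obtain ⟨d, hd⟩ := Finset.dvd_prod_of_mem c ha
      simp only [SetLike.mem_coe, LinearMap.mem_ker, LinearMap.toSpanSingleton_apply]
      change a • (∏ a ∈ T, c a) • m = 0
      rw [hd, mul_comm, mul_smul, smul_comm, smul_comm a, hc2 a (hmem a ha), smul_zero]
    exact fun a ha => this ha
  refine ⟨t • m, t * s, fun h => (p.2.mem_or_mem h).elim ht s.2, ?_, fun a => ⟨fun h => ?_, hz a⟩⟩
  · rw [map_smul, ← hms, mul_smul]; rfl
  · by_contra ha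
    apply hy
    have hu : a * t * s ∈ p.asIdeal.primeCompl := p.asIdeal.primeCompl.mul_mem (p.asIdeal.primeCompl.mul_mem ha ht) s.2
    have h0 : (a * t * s) • y = 0 := by
      rw [mul_smul]
      have : (s : R) • y = LocalizedModule.mkLinearMap p.asIdeal.primeCompl M m := hms
      rw [this, ← map_smul, mul_smul, h, map_zero]
    exact IsLocalizedModule.smul_injective (LocalizedModule.mkLinearMap p.asIdeal.primeCompl M) ⟨_, hu⟩
      (h0.trans (smul_zero _).symm)

theorem dv_zero (p : PrimeSpectrum R) {M : Type} [AddCommGroup M] [Module R M] :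
    dv R p M 0 ↔ ∀ y : LocalizedModule p.asIdeal.primeCompl M, (∀ a ∈ p.asIdeal, a • y = 0) → y = 0 := by
  unfold dv
  rw [res_hom]
  refine forall_congr' fun y => imp_congr_left ⟨fun h a ha => ?_, fun h a ha => ?_⟩
  · rw [← algebraMap_smul (Localization.AtPrime p.asIdeal) a y]
    exact h _ ((IsLocalization.AtPrime.to_map_mem_maximal_iff _ p.asIdeal a).2 ha)
  · have : LinearMap.ker (LinearMap.toSpanSingleton (Localization.AtPrime p.asIdeal) _ y) ≥ 
      IsLocalRing.maximalIdeal (Localization.AtPrime p.asIdeal) := by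
      rw [← Localization.AtPrime.map_eq_maximalIdeal, Ideal.map, ge_iff_le, Ideal.span_le]
      rintro _ ⟨b, hb, rfl⟩
      simp only [SetLike.mem_coe, LinearMap.mem_ker, LinearMap.toSpanSingleton_apply]
      rw [algebraMap_smul]; exact h b hb
    exact this ha

/-- p is the annihilator of an element -/
def AssE (p : PrimeSpectrum R) (M : Type) [AddCommGroup M] [Module R M] : Prop :=
  ∃ z : M, ∀ a, a • z = 0 ↔ a ∈ p.asIdeal

theorem assE_iff [IsNoetherianRing R] (p : PrimeSpectrum R) {M : Type} [AddCommGroup M] [Module R M] :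
    p.asIdeal ∈ associatedPrimes R M ↔ AssE p M := by
  rw [AssociatedPrimes.mem_iff, isAssociatedPrime_iff]
  constructor
  · rintro ⟨_, x, hx⟩
    exact ⟨x, fun a => by rw [hx]; simp⟩
  · rintro ⟨z, hz⟩
    exact ⟨p.2, z, by ext a; rw [← hz]; simp⟩

theorem dv_zero_iff [IsNoetherianRing R] (p : PrimeSpectrum R) {M : Type} [AddCommGroup M] [Module R M] :
    dv R p M 0 ↔ ¬ AssE p M := by
  rw [dv_zero]
  constructor
  · rintro h ⟨z, hz⟩
    have h0 := h (LocalizedModule.mkLinearMap p.asIdeal.primeCompl M z) fun a ha => by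
      rw [← map_smul, (hz a).2 ha, map_zero]
    rw [IsLocalizedModule.eq_zero_iff p.asIdeal.primeCompl] at h0
    obtain ⟨s, hs⟩ := h0
    exact s.2 ((hz s).1 hs)
  · intro h y hy
    by_contra hc
    obtain ⟨z, s, -, -, hz⟩ := exists_ann p y hc hy
    exact h ⟨z, hz⟩

/-- essential embedding -/
def Ess {M E : Type} [AddCommGroup M] [Module R M] [AddCommGroup E] [Module R E] (f : M →ₗ[R] E) : Prop :=
  ∀ x : E, x ≠ 0 → ∃ (r : R) (m : M), r • x = f m ∧ f m ≠ 0

theorem ess_of {M E : Type} [AddCommGroup M] [Module R M] [AddCommGroup E] [Module R E] {f : M →ₗ[R] E}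
    (h : ∀ K : Submodule R E, K ≠ ⊥ → K ⊓ LinearMap.range f ≠ ⊥) : Ess f := by
  intro x hx
  have := h (R ∙ x) (by simpa using hx)
  rw [Submodule.ne_bot_iff] at this
  obtain ⟨y, ⟨hy1, m, rfl⟩, hy⟩ := this
  obtain ⟨r, hr⟩ := Submodule.mem_span_singleton.1 hy1
  exact ⟨r, m, hr, hy⟩

theorem of_ess {M E : Type} [AddCommGroup M] [Module R M] [AddCommGroup E] [Module R E] {f : M →ₗ[R] E}
    (h : Ess f) (K : Submodule R E) (hK : K ≠ ⊥) : K ⊓ LinearMap.range f ≠ ⊥ := by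
  rw [Submodule.ne_bot_iff] at *
  obtain ⟨x, hx, hx0⟩ := hK
  obtain ⟨r, m, h1, h2⟩ := h x hx0
  exact ⟨f m, ⟨h1 ▸ K.smul_mem r hx, m, rfl⟩, h2⟩

theorem hull_shift [IsNoetherianRing R] (p : PrimeSpectrum R) {A B C : Type} [AddCommGroup A] [Module R A] [AddCommGroup B] [Module R B]
    [AddCommGroup C] [Module R C] {f : A →ₗ[R] B} {g : B →ₗ[R] C} (h : SES f g) (hB : Module.Injective R B)
    (he : Ess f) (n : ℕ) : dv R p C n ↔ dv R p A (n+1) := by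
  refine ⟨fun h1 => dv_k2 p h h1 (dv_inj p hB n), fun h1 => ?_⟩
  cases n with
  | succ n => exact dv_k3 p h (dv_inj p hB n) h1
  | zero =>
    refine ev_zero_iff.2 fun u => ?_
    obtain ⟨v, rfl⟩ := ev_lift (h.loc p.asIdeal.primeCompl) h1 u
    ext w
    rw [LinearMap.comp_apply, LinearMap.zero_apply]
    by_cases hw : v w = 0
    · rw [hw, map_zero]
    have hk : ∀ a ∈ p.asIdeal, a • v w = 0 := fun a ha => by
      rw [← algebraMap_smul (Localization.AtPrime p.asIdeal) a (v w), ← map_smul, Algebra.smul_def]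
      have : algebraMap (Localization.AtPrime p.asIdeal) (IsLocalRing.ResidueField (Localization.AtPrime p.asIdeal))
          (algebraMap R _ a) = 0 := by
        rw [IsLocalRing.ResidueField.algebraMap_eq]
        exact (IsLocalRing.residue_eq_zero_iff _).2 ((IsLocalization.AtPrime.to_map_mem_maximal_iff _ p.asIdeal a).2 ha)
      rw [this, zero_mul, map_zero]
    obtain ⟨z, s, hs, hz, hz'⟩ := exists_ann p (v w) hw hk
    have hz0 : z ≠ 0 := fun h => p.2.ne_top ((Ideal.eq_top_iff_one _).2 ((hz' 1).1 (by simp [h])))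
    obtain ⟨r, m, h2, h3⟩ := he z hz0
    have hr : r ∉ p.asIdeal := fun hr => h3 (by rw [← h2]; exact (hz' r).2 hr)
    have hu : r * s ∈ p.asIdeal.primeCompl := p.asIdeal.primeCompl.mul_mem hr hs
    have h0 : (r * s) • LocalizedModule.map p.asIdeal.primeCompl g (v w) = 0 := by
      rw [← LinearMap.map_smul_of_tower, mul_smul, hz, ← map_smul, h2]
      have : g (f m) = 0 := (h.ex _).2 ⟨m, rfl⟩
      simp [LocalizedModule.mkLinearMap_apply, LocalizedModule.map_mk, this]
    exact IsLocalizedModule.smul_injective (LocalizedModule.mkLinearMap p.asIdeal.primeCompl C) ⟨_, hu⟩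
      (h0.trans (smul_zero _).symm)

end DepthSec


section FinDepth
variable {A : Type} [CommRing A] [IsLocalRing A] [IsNoetherianRing A]

theorem fin_depth_aux (I : Ideal A) (hI : I ≠ ⊤) : ∃ i, ¬ ev A (IsLocalRing.ResidueField A) (A ⧸ I) i := by
  induction I using IsWellFounded.induction (α := Ideal A) (· > ·) with
  | _ I ih =>
  by_contra! hc
  have h0 : Subsingleton (IsLocalRing.ResidueField A →ₗ[A] (A ⧸ I)) :=
    subsingleton_of_forall_eq 0 (ev_zero_iff.1 (hc 0))
  obtain ⟨r, hr, hreg⟩ := IsSMulRegular.subsingleton_linearMap_iff.1 h0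
  have hr' : r ∈ IsLocalRing.maximalIdeal A := by
    have := Module.mem_annihilator.1 hr 1
    rw [Algebra.smul_def, mul_one, IsLocalRing.ResidueField.algebraMap_eq] at this
    exact (IsLocalRing.residue_eq_zero_iff _).1 this
  let J := I ⊔ Ideal.span {r}
  have hJ : J ≠ ⊤ := by
    intro h
    have : J ≤ IsLocalRing.maximalIdeal A :=
      sup_le (IsLocalRing.le_maximalIdeal hI) ((Ideal.span_singleton_le_iff_mem _).2 hr')
    exact (IsLocalRing.maximalIdeal.isMaximal A).ne_top (top_le_iff.1 (h ▸ this))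
  have hlt : I < J := by
    refine lt_of_le_of_ne le_sup_left fun h => ?_
    have hrI : r ∈ I := h ▸ (le_sup_right : _ ≤ J) (Ideal.mem_span_singleton_self r)
    have h1 : (Submodule.Quotient.mk (p := I) 1) = 0 := hreg (by
      change r • Submodule.Quotient.mk (p := I) 1 = r • (0 : A ⧸ I)
      rw [smul_zero, ← Submodule.Quotient.mk_smul, Submodule.Quotient.mk_eq_zero]
      simpa using hrI)
    rw [Submodule.Quotient.mk_eq_zero] at h1
    exact hI ((Ideal.eq_top_iff_one _).2 h1)
  obtain ⟨i, hi⟩ := ih J hlt hJ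
  apply hi
  let g : (A ⧸ I) →ₗ[A] (A ⧸ J) := Submodule.factor hlt.le
  have hs : SES (LinearMap.lsmul A (A ⧸ I) r) g := by
    refine ⟨hreg, fun y => ?_, Submodule.factor_surjective _⟩
    obtain ⟨a, rfl⟩ := Submodule.Quotient.mk_surjective _ y
    constructor
    · intro h
      have h : a ∈ J := (Submodule.Quotient.mk_eq_zero J).1 h
      obtain ⟨b, hb, c, hc, rfl⟩ := Submodule.mem_sup.1 h
      obtain ⟨d, rfl⟩ := Ideal.mem_span_singleton'.1 hc
      refine ⟨Submodule.Quotient.mk d, ?_⟩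
      rw [LinearMap.lsmul_apply, ← Submodule.Quotient.mk_smul]
      rw [Submodule.Quotient.eq]
      have : r • d - (b + d * r) = - b := by simp [mul_comm]
      rw [this]; exact I.neg_mem hb
    · rintro ⟨z, hz⟩
      rw [← hz, LinearMap.lsmul_apply, map_smul]
      obtain ⟨d, hd⟩ := Submodule.Quotient.mk_surjective _ (g z)
      rw [← hd, ← Submodule.Quotient.mk_smul, Submodule.Quotient.mk_eq_zero]
      exact (le_sup_right : _ ≤ J) (Ideal.mem_span_singleton'.2 ⟨d, mul_comm _ _⟩)
  exact ev_k3 hs (hc i) (hc (i+1))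

theorem fin_depth : ∃ i, ¬ ev A (IsLocalRing.ResidueField A) A i := by
  obtain ⟨i, hi⟩ := fin_depth_aux (⊥ : Ideal A) bot_ne_top
  refine ⟨i, fun h => hi ?_⟩
  exact (ev_congr' (Submodule.quotEquivOfEqBot ⊥ rfl)).2 h

end FinDepth

section Hull
variable {R : Type} [CommRing R]

theorem dv_ring (p : PrimeSpectrum R) (n : ℕ) : dv R p R n ↔
    ev (Localization.AtPrime p.asIdeal) (IsLocalRing.ResidueField (Localization.AtPrime p.asIdeal))
      (Localization.AtPrime p.asIdeal) n := by
  unfold dv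
  exact Iff.rfl

theorem dv_ring_fin [IsNoetherianRing R] (p : PrimeSpectrum R) : ∃ i, ¬ dv R p R i := by
  haveI : IsNoetherianRing (Localization.AtPrime p.asIdeal) :=
    IsLocalization.isNoetherianRing p.asIdeal.primeCompl _ inferInstance
  obtain ⟨i, hi⟩ := fin_depth (A := Localization.AtPrime p.asIdeal)
  exact ⟨i, fun h => hi ((dv_ring p i).1 h)⟩

theorem inj_retract {E I : Type} [AddCommGroup E] [Module R E] [AddCommGroup I] [Module R I]
    (hI : Module.Injective R I) (i : E →ₗ[R] I) (r : I →ₗ[R] E) (h : ∀ x, r (i x) = x) : Module.Injective R E := by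
  apply inj_of_ev
  intro M _ _
  exact ev_retract' i r (by ext x; exact h x) (ev_inj hI 0)

theorem inj_ext {E A B : Type} [AddCommGroup E] [Module R E] [AddCommGroup A] [Module R A]
    [AddCommGroup B] [Module R B] (hE : Module.Injective R E) (f : A →ₗ[R] B) (hf : Function.Injective f)
    (u : A →ₗ[R] E) : ∃ v : B →ₗ[R] E, ∀ a, v (f a) = u a := by
  obtain ⟨v, hv⟩ := ev_extend (ses_coker hf) (ev_inj hE 0) u
  exact ⟨v, fun a => LinearMap.congr_fun hv a⟩

theorem hull_in {I : Type} [AddCommGroup I] [Module R I] (hI : Module.Injective R I) (M : Submodule R I) :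
    ∃ K : Submodule R I, M ≤ K ∧ Module.Injective R K ∧ ∀ x ∈ K, x ≠ 0 → ∃ r : R, r • x ∈ M ∧ r • x ≠ 0 := by
  obtain ⟨K, hMK, hK⟩ := zorn_le_nonempty₀ {K : Submodule R I | ∀ x ∈ K, x ≠ 0 → ∃ r : R, r • x ∈ M ∧ r • x ≠ 0}
    (fun c hc hch y hy => by
      refine ⟨sSup c, fun x hx hx0 => ?_, fun z hz => le_sSup hz⟩
      rw [Submodule.mem_sSup_of_directed ⟨y, hy⟩ hch.directedOn] at hx
      obtain ⟨z, hz, hxz⟩ := hx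
      exact hc hz x hxz hx0) M (fun x hx hx0 => ⟨1, by simpa using hx, by simpa using hx0⟩)
  have hKe := hK.prop
  obtain ⟨L, -, hL⟩ := zorn_le_nonempty₀ {L : Submodule R I | Disjoint L K}
    (fun c hc hch y hy => by
      refine ⟨sSup c, ?_, fun z hz => le_sSup hz⟩
      exact (DirectedOn.disjoint_sSup_left hch.directedOn).2 fun b hb => hc hb) ⊥ disjoint_bot_left
  have hess : ∀ x, x ∉ L → ∃ (r : R) (k : I), k ∈ K ∧ k ≠ 0 ∧ r • x - k ∈ L := by
    intro x hx
    have hnd : ¬ Disjoint (L ⊔ R ∙ x) K := fun h => by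
      have := hL.le_of_ge h le_sup_left
      exact hx (this ((le_sup_right : _ ≤ L ⊔ R ∙ x) (Submodule.mem_span_singleton_self x)))
    rw [Submodule.disjoint_def] at hnd
    push Not at hnd
    obtain ⟨k, hk1, hk2, hk0⟩ := hnd
    obtain ⟨l, hl, y, hy, rfl⟩ := Submodule.mem_sup.1 hk1
    obtain ⟨r, rfl⟩ := Submodule.mem_span_singleton.1 hy
    refine ⟨r, _, hk2, hk0, ?_⟩
    rw [show r • x - (l + r • x) = - l by abel]
    exact L.neg_mem hl
  have hinj : Function.Injective (L.mkQ ∘ₗ K.subtype) := by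
    rw [← LinearMap.ker_eq_bot, LinearMap.ker_eq_bot']
    rintro ⟨k, hk⟩ h
    have hkL : k ∈ L := by simpa using h
    have := (Submodule.disjoint_def.1 hL.prop) k hkL hk
    exact Subtype.ext this
  obtain ⟨h, hh⟩ := inj_ext hI _ hinj K.subtype
  let r : I →ₗ[R] I := h ∘ₗ L.mkQ
  have hrK : ∀ k ∈ K, r k = k := fun k hk => hh ⟨k, hk⟩
  have hrL : ∀ l ∈ L, r l = 0 := fun l hl => by
    have : L.mkQ l = 0 := by simpa using hl
    change h (L.mkQ l) = 0
    rw [this, map_zero]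
  have hrange : ∀ x, r x ∈ K := by
    have hge : LinearMap.range r ∈ {K : Submodule R I | ∀ x ∈ K, x ≠ 0 → ∃ r : R, r • x ∈ M ∧ r • x ≠ 0} := by
      rintro _ ⟨x, rfl⟩ hx0
      have hxL : x ∉ L := fun hx => hx0 (hrL x hx)
      obtain ⟨a, k, hk, hk0, hal⟩ := hess x hxL
      have hak : a • r x = k := by
        have := hrL _ hal
        rwa [map_sub, map_smul, hrK k hk, sub_eq_zero] at this
      obtain ⟨b, hb1, hb2⟩ := hKe k hk hk0
      exact ⟨b * a, by rwa [mul_smul, hak], by rwa [mul_smul, hak]⟩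
    have := hK.le_of_ge hge (fun k hk => ⟨k, hrK k hk⟩)
    exact fun x => this ⟨x, rfl⟩
  exact ⟨K, hMK, inj_retract hI K.subtype (r.codRestrict K hrange) (fun x => Subtype.ext (hrK x x.2)), hKe⟩

theorem exists_hull (R : Type) [CommRing R] (M : Type) [AddCommGroup M] [Module R M] :
    ∃ (E : Type) (_ : AddCommGroup E) (_ : Module R E) (f : M →ₗ[R] E),
      Module.Injective R E ∧ Function.Injective f ∧ Ess f := by
  obtain ⟨I, _, _, f, hI, hf⟩ := exists_inj R M
  obtain ⟨K, h1, h2, h3⟩ := hull_in hI (LinearMap.range f)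
  refine ⟨K, inferInstance, inferInstance, f.codRestrict K fun x => h1 ⟨x, rfl⟩, h2,
    fun x y h => hf (congrArg Subtype.val h), fun x hx => ?_⟩
  obtain ⟨r, ⟨m, hm⟩, hr⟩ := h3 x x.2 (fun h => hx (Subtype.ext h))
  refine ⟨r, m, Subtype.ext hm.symm, fun h => hr ?_⟩
  rw [← hm]; exact congrArg Subtype.val h

theorem exists_cosyz (R : Type) [CommRing R] (M : Type) [AddCommGroup M] [Module R M] : Nonempty (CosyzygySeq R M) := by
  choose E i1 i2 f h1 h2 h3 using fun M : ModuleCat.{0} R => exists_hull R M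
  let C : ℕ → ModuleCat.{0} R := fun n => Nat.rec (motive := fun _ => ModuleCat.{0} R) (ModuleCat.of R M)
    (fun _ C => ModuleCat.of R (E C ⧸ LinearMap.range (f C))) n
  exact ⟨{ C := C, iso0 := LinearEquiv.refl R (ModuleCat.of R M), E := fun n => ModuleCat.of R (E (C n)), emb := fun n => f (C n)
           env := fun n => ⟨h1 _, h2 _, of_ess (h3 _)⟩
           isoSucc := fun n => LinearEquiv.refl R (ModuleCat.of R (E (C n) ⧸ LinearMap.range (f (C n)))) }⟩

theorem cosyz_dv [IsNoetherianRing R] {M : Type} [AddCommGroup M] [Module R M] (s : CosyzygySeq R M) (p : PrimeSpectrum R)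
    (n i : ℕ) : dv R p (s.C n) i ↔ dv R p M (n+i) := by
  induction n generalizing i with
  | zero => rw [zero_add]; exact dv_congr p s.iso0
  | succ n ih =>
    rw [dv_congr p (s.isoSucc n), hull_shift p (ses_coker (s.env n).2.1) (s.env n).1 (ess_of (s.env n).2.2), ih]
    rw [show n + (i+1) = n+1+i by omega]

theorem cosyz_ass [IsNoetherianRing R] {M : Type} [AddCommGroup M] [Module R M] (s : CosyzygySeq R M) (p : PrimeSpectrum R)
    (n : ℕ) : p.asIdeal ∈ associatedPrimes R (s.C n) ↔ ¬ dv R p M n := by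
  rw [assE_iff, ← not_not (a := AssE p _), ← dv_zero_iff, cosyz_dv s p n 0, add_zero]

end Hull


section Eklof
variable {R : Type} [CommRing R]

theorem eklof_ext {K L T X I C : Type} [AddCommGroup K] [Module R K] [AddCommGroup L] [Module R L]
    [AddCommGroup T] [Module R T] [AddCommGroup X] [Module R X] [AddCommGroup I] [Module R I] [AddCommGroup C] [Module R C]
    {ι : K →ₗ[R] L} {π : L →ₗ[R] T} (h : SES ι π) {f : X →ₗ[R] I} {g : I →ₗ[R] C} (hX : SES f g)
    (hI : Module.Injective R I) (hT : ev R T X 1) (u : L →ₗ[R] C) (v : K →ₗ[R] I) (huv : ∀ x, g (v x) = u (ι x)) :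
    ∃ w : L →ₗ[R] I, (∀ x, g (w x) = u x) ∧ ∀ x, w (ι x) = v x := by
  obtain ⟨w0, hw0⟩ := inj_ext hI ι h.inj v
  let d := u - g ∘ₗ w0
  have hd : d ∘ₗ ι = 0 := by ext x; simp [d, hw0, huv]
  obtain ⟨e, he⟩ : ∃ e : T →ₗ[R] C, e ∘ₗ π = d := by
    have hk : LinearMap.ker π ≤ LinearMap.ker d := by
      intro x hx
      obtain ⟨y, rfl⟩ := (h.ex x).1 hx
      exact LinearMap.congr_fun hd y
    refine ⟨(LinearMap.ker π).liftQ d hk ∘ₗ (π.quotKerEquivOfSurjective h.surj).symm.toLinearMap, ?_⟩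
    ext x
    have : (π.quotKerEquivOfSurjective h.surj).symm (π x) = Submodule.Quotient.mk x := by
      rw [LinearEquiv.symm_apply_eq]; rfl
    simp [this]
  obtain ⟨w1, hw1⟩ := ev_lift hX hT e
  refine ⟨w0 + w1 ∘ₗ π, fun x => ?_, fun x => ?_⟩
  · have h1 : g (w1 (π x)) = e (π x) := LinearMap.congr_fun hw1 _
    have h2 : e (π x) = d x := LinearMap.congr_fun he x
    simp [h1, h2, d]
  · have : π (ι x) = 0 := (h.ex _).2 ⟨x, rfl⟩
    simp [this, hw0]

theorem eklof {N X : Type} [AddCommGroup N] [Module R N] [AddCommGroup X] [Module R X] (𝒮 : Set (Submodule R N))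
    (h0 : ⊥ ∈ 𝒮) (hch : ∀ c ⊆ 𝒮, c.Nonempty → DirectedOn (· ≤ ·) c → sSup c ∈ 𝒮)
    (hst : ∀ K ∈ 𝒮, K ≠ ⊤ → ∃ L ∈ 𝒮, K < L ∧ ∃ (T : Type) (_ : AddCommGroup T) (_ : Module R T) (π : L →ₗ[R] T),
      Function.Surjective π ∧ (∀ x, π x = 0 ↔ x.1 ∈ K) ∧ ev R T X 1) : ev R N X 1 := by
  obtain ⟨I, _, _, f, hI, hf⟩ := exists_inj R X
  have hX := ses_coker hf
  rw [ev_iff_lift hX hI]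
  intro u
  let g := (LinearMap.range f).mkQ
  let Z : Set (LinearPMap (RingHom.id R) N I) := {v | v.domain ∈ 𝒮 ∧ ∀ x : v.domain, g (v x) = u x}
  have hz0 : (⊥ : LinearPMap (RingHom.id R) N I) ∈ Z := ⟨h0, fun x => by
    have : x = 0 := Subtype.ext ((Submodule.mem_bot R).1 x.2)
    rw [this]; simp⟩
  obtain ⟨v, -, hv⟩ := zorn_le_nonempty₀ Z (fun c hc hchain y hy => by
    have hdir : DirectedOn (· ≤ ·) c := hchain.directedOn
    refine ⟨LinearPMap.sSup c hdir, ⟨?_, ?_⟩, fun z hz => LinearPMap.le_sSup hdir hz⟩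
    · refine hch _ ?_ ⟨_, y, hy, rfl⟩ ?_
      · rintro _ ⟨z, hz, rfl⟩; exact (hc hz).1
      · exact hdir.mono_comp (fun _ _ h => h.1)
    · rintro ⟨x, hx⟩
      obtain ⟨z, hz, hxz⟩ := (LinearPMap.mem_domain_sSup_iff ⟨y, hy⟩ hdir).1 hx
      have := (LinearPMap.le_sSup hdir hz).2 (x := ⟨x, hxz⟩) (y := ⟨x, hx⟩) rfl
      rw [← this]
      exact (hc hz).2 ⟨x, hxz⟩) ⊥ hz0
  have htop : v.domain = ⊤ := by
    by_contra hne
    obtain ⟨L, hL, hlt, T, _, _, π, hπ, hker, hT⟩ := hst _ hv.prop.1 hne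
    have hs : SES (Submodule.inclusion hlt.le) π := by
      refine ⟨Submodule.inclusion_injective _, fun x => ?_, hπ⟩
      rw [hker]
      exact ⟨fun h => ⟨⟨x, h⟩, rfl⟩, by rintro ⟨y, rfl⟩; exact y.2⟩
    obtain ⟨w, hw1, hw2⟩ := eklof_ext hs hX hI hT (u ∘ₗ L.subtype) v.toFun (fun x => hv.prop.2 x)
    have hle : v ≤ ⟨L, w⟩ := ⟨hlt.le, fun {x y} hxy => by
      have : y = Submodule.inclusion hlt.le x := Subtype.ext hxy.symm
      rw [this]; exact (hw2 x).symm⟩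
    have := hv.le_of_ge (y := ⟨L, w⟩) ⟨hL, hw1⟩ hle
    exact absurd this.1 (not_le_of_gt hlt)
  refine ⟨v.toFun ∘ₗ LinearMap.codRestrict v.domain LinearMap.id (fun x => htop ▸ trivial), ?_⟩
  ext x
  exact hv.prop.2 ⟨x, _⟩

theorem kp_iso (p : PrimeSpectrum R) {T : Type} [AddCommGroup T] [Module R T] (z : T)
    (hz : ∀ a : R, a • z = 0 ↔ a ∈ p.asIdeal)
    (hs : ∀ s ∉ p.asIdeal, Function.Bijective (fun x : T => s • x))
    (hy : ∀ y : T, ∃ s ∉ p.asIdeal, ∃ r : R, s • y = r • z) : Nonempty (resField R p ≃ₗ[R] T) := by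
  let f : (R ⧸ p.asIdeal) →ₗ[R] T := p.asIdeal.liftQ (LinearMap.toSpanSingleton R T z) (fun a ha => (hz a).2 ha)
  have hf : ∀ r : R, f (Submodule.Quotient.mk r) = r • z := fun r => rfl
  have : IsLocalizedModule p.asIdeal.primeCompl f := by
    refine ⟨fun s => ?_, fun y => ?_, fun {x y} h => ?_⟩
    · rw [Module.End.isUnit_iff]; exact hs s s.2
    · obtain ⟨s, hs, r, hr⟩ := hy y
      exact ⟨(Submodule.Quotient.mk r, ⟨s, hs⟩), hr⟩
    · obtain ⟨a, rfl⟩ := Submodule.Quotient.mk_surjective _ x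
      obtain ⟨b, rfl⟩ := Submodule.Quotient.mk_surjective _ y
      rw [hf, hf, ← sub_eq_zero, ← sub_smul, hz] at h
      exact ⟨1, by rw [(Submodule.Quotient.eq _).2 h]⟩
  exact ⟨IsLocalizedModule.iso p.asIdeal.primeCompl f⟩

theorem kp_iso_res (p : PrimeSpectrum R) : Nonempty (resField R p ≃ₗ[R] IsLocalRing.ResidueField (Localization.AtPrime p.asIdeal)) := by
  have halg : ∀ a : R, algebraMap R (IsLocalRing.ResidueField (Localization.AtPrime p.asIdeal)) a = 0 ↔ a ∈ p.asIdeal := by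
    intro a
    rw [IsScalarTower.algebraMap_apply R (Localization.AtPrime p.asIdeal), IsLocalRing.ResidueField.algebraMap_eq,
      IsLocalRing.residue_eq_zero_iff]
    exact IsLocalization.AtPrime.to_map_mem_maximal_iff _ p.asIdeal a
  refine kp_iso p 1 (fun a => ?_) (fun s hs => ?_) (fun y => ?_)
  · rw [Algebra.smul_def, mul_one, halg]
  · have h0 : algebraMap R (IsLocalRing.ResidueField (Localization.AtPrime p.asIdeal)) s ≠ 0 := fun h => hs ((halg s).1 h)
    simp only [Algebra.smul_def]
    exact mulLeft_bijective₀ _ h0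
  · obtain ⟨b, rfl⟩ := IsLocalRing.residue_surjective y
    obtain ⟨⟨r, s⟩, hrs⟩ := IsLocalization.surj p.asIdeal.primeCompl b
    refine ⟨s, s.2, r, ?_⟩
    rw [Algebra.smul_def, Algebra.smul_def, mul_one, IsScalarTower.algebraMap_apply R (Localization.AtPrime p.asIdeal) _ r, ← hrs]
    rw [IsScalarTower.algebraMap_apply R (Localization.AtPrime p.asIdeal) _ (s : R), IsLocalRing.ResidueField.algebraMap_eq, ← map_mul, mul_comm]

theorem ev_local_tors [IsNoetherianRing R] (p : PrimeSpectrum R) {E X : Type} [AddCommGroup E] [Module R E]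
    [AddCommGroup X] [Module R X]
    (hs : ∀ s ∉ p.asIdeal, Function.Bijective (fun x : E => s • x))
    (ht : ∀ a ∈ p.asIdeal, ∀ x : E, ∃ n : ℕ, a ^ n • x = 0) (hk : ev R (resField R p) X 1) : ev R E X 1 := by
  refine eklof {K | ∀ s ∉ p.asIdeal, ∀ x, s • x ∈ K → x ∈ K} ?_ ?_ ?_
  · intro s hsp x hx
    rw [Submodule.mem_bot] at *
    exact (hs s hsp).1 (hx.trans (smul_zero s).symm)
  · intro c hc hne hd s hsp x hx
    rw [Submodule.mem_sSup_of_directed hne hd] at *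
    obtain ⟨y, hy, hx⟩ := hx
    exact ⟨y, hy, hc hy s hsp x hx⟩
  · intro K hK hKt
    have : Nontrivial (E ⧸ K) := Submodule.Quotient.nontrivial_iff.2 hKt
    have hQi : ∀ s ∉ p.asIdeal, ∀ y : E ⧸ K, s • y = 0 → y = 0 := by
      intro s hsp y hy
      obtain ⟨x, rfl⟩ := Submodule.Quotient.mk_surjective _ y
      rw [← Submodule.Quotient.mk_smul, Submodule.Quotient.mk_eq_zero] at hy
      exact (Submodule.Quotient.mk_eq_zero _).2 (hK s hsp x hy)
    have hQs : ∀ s ∉ p.asIdeal, ∀ y : E ⧸ K, ∃ y', s • y' = y := by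
      intro s hsp y
      obtain ⟨x, rfl⟩ := Submodule.Quotient.mk_surjective _ y
      obtain ⟨x', hx'⟩ := (hs s hsp).2 x
      exact ⟨Submodule.Quotient.mk x', by rw [← Submodule.Quotient.mk_smul]; exact congrArg _ hx'⟩
    obtain ⟨P, hP⟩ := associatedPrimes.nonempty R (E ⧸ K)
    obtain ⟨q, hq0⟩ := (assE_iff ⟨P, hP.1⟩).1 hP
    have hPp : P = p.asIdeal := by
      apply le_antisymm
      · intro a ha
        by_contra hap
        have := hQi a hap q ((hq0 a).2 ha)
        have h1 := (hq0 1).1 (by simp [this])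
        exact hP.1.ne_top ((Ideal.eq_top_iff_one _).2 h1)
      · intro a ha
        obtain ⟨x, hx⟩ := Submodule.Quotient.mk_surjective _ q
        obtain ⟨n, hn⟩ := ht a ha x
        have : a ^ n ∈ P := (hq0 _).1 (by rw [← hx, ← Submodule.Quotient.mk_smul, hn]; rfl)
        exact hP.1.mem_of_pow_mem n this
    subst hPp
    let Lq : Submodule R (E ⧸ K) :=
      { carrier := {y | ∃ s ∉ p.asIdeal, ∃ r : R, s • y = r • q}
        add_mem' := by
          rintro y y' ⟨s, hs, r, h⟩ ⟨s', hs', r', h'⟩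
          refine ⟨s * s', fun hm => (p.2.mem_or_mem hm).elim hs hs', s' * r + s * r', ?_⟩
          rw [smul_add, add_smul, mul_smul s' r, ← h, mul_smul s r', ← h', mul_comm s s', mul_smul, mul_comm s' s, mul_smul]
        zero_mem' := ⟨1, p.2.ne_top ∘ (Ideal.eq_top_iff_one _).2, 0, by simp⟩
        smul_mem' := by
          rintro a y ⟨s, hs, r, h⟩
          exact ⟨s, hs, a * r, by rw [smul_comm, h, mul_smul]⟩ }
    have hqL : q ∈ Lq := ⟨1, p.2.ne_top ∘ (Ideal.eq_top_iff_one _).2, 1, rfl⟩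
    have hKL : K ≤ Lq.comap K.mkQ := fun x hx => by
      have : K.mkQ x = 0 := by simpa using hx
      rw [Submodule.mem_comap, this]; exact Lq.zero_mem
    have hLs : ∀ s ∉ p.asIdeal, ∀ y, s • y ∈ Lq → y ∈ Lq := by
      rintro s hsp y ⟨t, ht, r, h⟩
      exact ⟨t * s, fun hm => (p.2.mem_or_mem hm).elim ht hsp, r, by rw [mul_smul, h]⟩
    refine ⟨Lq.comap K.mkQ, fun s hsp x hx => hLs s hsp _ (by simpa using hx), lt_of_le_of_ne hKL fun h => ?_, Lq, inferInstance, inferInstance,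
      K.mkQ.restrict (fun x hx => hx), ?_, ?_, ?_⟩
    · obtain ⟨x, hx⟩ := Submodule.Quotient.mk_surjective _ q
      have hxK : x ∈ K := h ▸ (show K.mkQ x ∈ Lq from (by rw [Submodule.mkQ_apply, hx]; exact hqL))
      have hq00 : q = 0 := by rw [← hx]; exact (Submodule.Quotient.mk_eq_zero _).2 hxK
      exact p.2.ne_top ((Ideal.eq_top_iff_one _).2 ((hq0 1).1 (by simp [hq00])))
    · rintro ⟨y, hy⟩
      obtain ⟨x, rfl⟩ := Submodule.Quotient.mk_surjective _ y
      exact ⟨⟨x, hy⟩, rfl⟩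
    · rintro ⟨x, hx⟩
      rw [← Submodule.Quotient.mk_eq_zero K (x := x)]
      exact ⟨fun h => congrArg Subtype.val h, fun h => Subtype.ext h⟩
    · obtain ⟨e⟩ := kp_iso p (⟨q, hqL⟩ : Lq) (fun a => by rw [← hq0 a]; exact Subtype.ext_iff) (fun s hsp => by
        constructor
        · intro y y' h
          have : s • (y.1 - y'.1) = 0 := by rw [smul_sub, sub_eq_zero]; exact congrArg Subtype.val h
          exact Subtype.ext (sub_eq_zero.1 (hQi s hsp _ this))
        · intro y
          obtain ⟨y', hy'⟩ := hQs s hsp y.1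
          exact ⟨⟨y', hLs s hsp _ (hy' ▸ y.2)⟩, Subtype.ext hy'⟩) (by
        rintro ⟨y, s, hs, r, h⟩
        exact ⟨s, hs, r, Subtype.ext h⟩)
      exact (ev_congr e).1 hk

end Eklof


section InjEv
variable {R : Type} [CommRing R] [IsNoetherianRing R]

theorem ev_indec (p : PrimeSpectrum R) {E X : Type} [AddCommGroup E] [Module R E]
    [AddCommGroup X] [Module R X] (hE : Module.Injective R E) (z : E) (hz : ∀ a : R, a • z = 0 ↔ a ∈ p.asIdeal)
    (hess : ∀ x : E, x ≠ 0 → ∃ r c : R, r • x = c • z ∧ r • x ≠ 0)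
    (hk : ev R (resField R p) X 1) : ev R E X 1 := by
  have hinj : ∀ s ∉ p.asIdeal, ∀ x : E, s • x = 0 → x = 0 := by
    intro s hs x hx
    by_contra hx0
    obtain ⟨r, c, h1, h2⟩ := hess x hx0
    apply h2
    have : s • c • z = 0 := by rw [← h1, smul_comm, hx, smul_zero]
    rw [← mul_smul, hz] at this
    rw [h1, hz]
    exact (p.2.mem_or_mem this).resolve_left hs
  refine ev_local_tors p (fun s hs => ?_) (fun a ha x => ?_) hk
  · have hi : Function.Injective (fun x : E => s • x) := fun x y h => by
      have : s • (x - y) = 0 := by rw [smul_sub, sub_eq_zero]; exact h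
      exact sub_eq_zero.1 (hinj s hs _ this)
    refine ⟨hi, fun y => ?_⟩
    obtain ⟨v, hv⟩ := inj_ext hE (LinearMap.lsmul R E s) hi LinearMap.id
    refine ⟨v y, ?_⟩
    have := hv y
    simp only [LinearMap.lsmul_apply, map_smul, LinearMap.id_apply] at this
    exact this
  · let I : ℕ →o Ideal R :=
      ⟨fun n => LinearMap.ker (LinearMap.toSpanSingleton R E (a ^ n • x)), monotone_nat_of_le_succ fun n b hb => by
        simp only [LinearMap.mem_ker, LinearMap.toSpanSingleton_apply] at *
        rw [pow_succ', mul_smul, smul_comm, hb, smul_zero]⟩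
    obtain ⟨n, hn⟩ := monotone_stabilizes_iff_noetherian.2 (inferInstance : IsNoetherian R R) I
    refine ⟨n, ?_⟩
    by_contra hx0
    obtain ⟨r, c, h1, h2⟩ := hess _ hx0
    apply h2
    have : r ∈ I (n+1) := by
      change r • (a ^ (n+1) • x) = 0
      rw [pow_succ', mul_smul, smul_comm, h1, ← mul_smul, mul_comm, mul_smul, (hz a).2 ha, smul_zero]
    rw [← hn (n+1) (Nat.le_succ n)] at this
    exact this

theorem inj_sSup {I : Type} [AddCommGroup I] [Module R I] (c : Set (Submodule R I)) (hne : c.Nonempty)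
    (hd : DirectedOn (· ≤ ·) c) (hc : ∀ K ∈ c, Module.Injective R K) : Module.Injective R ↥(sSup c) := by
  apply Module.Baer.injective
  intro J g
  have hfg : ((LinearMap.range g).map (sSup c).subtype).FG := by
    apply Submodule.FG.map
    rw [LinearMap.range_eq_map]
    have : Module.Finite R J := inferInstance
    exact this.1.map g
  have hle : (LinearMap.range g).map (sSup c).subtype ≤ sSup c := Submodule.map_subtype_le _ _
  obtain ⟨K, hK, hgK⟩ : ∃ K ∈ c, (LinearMap.range g).map (sSup c).subtype ≤ K := by
    exact (CompleteLattice.isCompactElement_iff_le_of_directed_sSup_le _ _).1 ((Submodule.fg_iff_compact _).1 hfg) c hne hd hle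
  let g' : J →ₗ[R] K := LinearMap.codRestrict K ((sSup c).subtype ∘ₗ g) (fun x => hgK ⟨g x, ⟨x, rfl⟩, rfl⟩)
  obtain ⟨v, hv⟩ := inj_ext (hc K hK) J.subtype J.injective_subtype g'
  refine ⟨Submodule.inclusion (le_sSup hK) ∘ₗ v, fun x hx => ?_⟩
  apply Subtype.ext
  have h1 : ((v x : K) : I) = (g' ⟨x, hx⟩ : K) := congrArg Subtype.val (hv ⟨x, hx⟩)
  exact h1

theorem inj_prod {A B : Type} [AddCommGroup A] [Module R A] [AddCommGroup B] [Module R B]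
    (hA : Module.Injective R A) (hB : Module.Injective R B) : Module.Injective R (A × B) := by
  apply inj_of_ev
  intro M _ _
  have : SES (LinearMap.inl R A B) (LinearMap.snd R A B) :=
    ⟨LinearMap.inl_injective, Function.Exact.inl_snd, LinearMap.snd_surjective⟩
  exact ev_k1 this (ev_inj hA 0) (ev_inj hB 0)

theorem inj_ev_one {I X : Type} [AddCommGroup I] [Module R I] [AddCommGroup X] [Module R X]
    (hI : Module.Injective R I) (hX : ∀ p : PrimeSpectrum R, AssE p I → ev R (resField R p) X 1) : ev R I X 1 := by
  refine eklof {K | Module.Injective R K} ?_ (fun c hc hne hd => inj_sSup c hne hd hc) ?_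
  · exact inj_retract hI (Submodule.subtype ⊥) 0 (fun x => Subsingleton.elim _ _)
  · intro K hK hKt
    obtain ⟨ρ, hρ⟩ := inj_ext hK K.subtype K.injective_subtype LinearMap.id
    have hD : LinearMap.ker ρ ≠ ⊥ := by
      intro h
      apply hKt
      rw [eq_top_iff]
      intro x _
      have : x - ρ x ∈ LinearMap.ker ρ := by
        rw [LinearMap.mem_ker, map_sub, sub_eq_zero]; exact (hρ (ρ x)).symm
      rw [h, Submodule.mem_bot, sub_eq_zero] at this
      rw [this]; exact (ρ x).2
    have : Nontrivial (LinearMap.ker ρ) := (Submodule.nontrivial_iff_ne_bot).2 hD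
    obtain ⟨P, hP⟩ := associatedPrimes.nonempty R (LinearMap.ker ρ)
    let p : PrimeSpectrum R := ⟨P, hP.1⟩
    obtain ⟨⟨z, hzρ⟩, hz⟩ := (assE_iff p).1 hP
    have hz : ∀ a : R, a • z = 0 ↔ a ∈ p.asIdeal := fun a => by
      rw [← hz a]; exact (Subtype.ext_iff (a1 := a • (⟨z, hzρ⟩ : LinearMap.ker ρ)) (a2 := 0)).symm
    obtain ⟨E, hE1, hE2, hE3⟩ := hull_in hI (R ∙ z)
    have hzE : z ∈ E := hE1 (Submodule.mem_span_singleton_self z)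
    have hz0 : z ≠ 0 := fun h => p.2.ne_top ((Ideal.eq_top_iff_one _).2 ((hz 1).1 (by simp [h])))
    have hdisj : ∀ x ∈ K, x ∈ E → x = 0 := by
      intro x hxK hxE
      by_contra hx0
      obtain ⟨r, hr1, hr2⟩ := hE3 x hxE hx0
      obtain ⟨c, hc⟩ := Submodule.mem_span_singleton.1 hr1
      have h1 : ρ (r • x) = 0 := by rw [← hc, map_smul, LinearMap.mem_ker.1 hzρ, smul_zero]
      have h2 := hρ ⟨r • x, K.smul_mem r hxK⟩
      rw [Submodule.subtype_apply, h1] at h2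
      exact hr2 (congrArg Subtype.val h2).symm
    let e0 : (K × E) →ₗ[R] ↥(K ⊔ E) := LinearMap.coprod (Submodule.inclusion le_sup_left) (Submodule.inclusion le_sup_right)
    have he0 : ∀ k, (e0 k : I) = k.1 + k.2 := fun k => rfl
    have hbij : Function.Bijective e0 := by
      constructor
      · rw [← LinearMap.ker_eq_bot, LinearMap.ker_eq_bot']
        rintro ⟨k, x⟩ h
        have h1 : (k : I) + x = 0 := congrArg Subtype.val h
        have h2 : (x : I) = 0 := hdisj x (by rw [← neg_eq_of_add_eq_zero_right h1]; exact K.neg_mem k.2) x.2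
        rw [h2, add_zero] at h1
        exact Prod.ext (Subtype.ext h1) (Subtype.ext h2)
      · rintro ⟨y, hy⟩
        obtain ⟨k, hk, x, hx, rfl⟩ := Submodule.mem_sup.1 hy
        exact ⟨(⟨k, hk⟩, ⟨x, hx⟩), rfl⟩
    let e := LinearEquiv.ofBijective e0 hbij
    refine ⟨K ⊔ E, ?_, ?_, E, inferInstance, inferInstance, LinearMap.snd R K E ∘ₗ e.symm.toLinearMap, ?_, ?_, ?_⟩
    · exact inj_retract (inj_prod hK hE2) e.symm.toLinearMap e.toLinearMap (fun x => by simp)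
    · refine lt_of_le_of_ne le_sup_left fun h => hz0 ?_
      exact hdisj z (h ▸ (le_sup_right : E ≤ K ⊔ E) hzE) hzE
    · exact (LinearMap.snd_surjective (R := R) (M := K) (M₂ := E)).comp e.symm.surjective
    · intro y
      obtain ⟨⟨k, x⟩, rfl⟩ := e.surjective y
      simp only [LinearMap.comp_apply, LinearEquiv.coe_coe, LinearEquiv.symm_apply_apply, LinearMap.snd_apply]
      change x = 0 ↔ (k : I) + x ∈ K
      constructor
      · rintro rfl; simp
      · intro h
        have : (x : I) ∈ K := by simpa using K.sub_mem h k.2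
        exact Subtype.ext (hdisj x this x.2)
    · refine ev_indec p hE2 ⟨z, hzE⟩ (fun a => by rw [← hz a]; exact Subtype.ext_iff) (fun x hx => ?_) (hX p ⟨z, hz⟩)
      obtain ⟨r, hr1, hr2⟩ := hE3 x x.2 (fun h => hx (Subtype.ext h))
      obtain ⟨c, hc⟩ := Submodule.mem_span_singleton.1 hr1
      exact ⟨r, c, Subtype.ext hc.symm, fun h => hr2 (congrArg Subtype.val h)⟩

theorem inj_ev_all {I X : Type} [AddCommGroup I] [Module R I] [AddCommGroup X] [Module R X]
    (hI : Module.Injective R I) (j : ℕ) (hX : ∀ p : PrimeSpectrum R, AssE p I → ev R (resField R p) X (j+1)) :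
    ev R I X (j+1) := by
  induction j generalizing X with
  | zero => exact inj_ev_one hI hX
  | succ j ih =>
    obtain ⟨J, _, _, f, hJ, hf⟩ := exists_inj R X
    rw [ev_shift_r (ses_coker hf) hJ]
    exact ih fun p hp => (ev_shift_r (ses_coker hf) hJ j).1 (hX p hp)

theorem assE_ess {M E : Type} [AddCommGroup M] [Module R M] [AddCommGroup E] [Module R E] {f : M →ₗ[R] E}
    (hf : Function.Injective f) (he : Ess f) (p : PrimeSpectrum R) (h : AssE p E) : AssE p M := by
  obtain ⟨z, hz⟩ := h
  have hz0 : z ≠ 0 := fun h => p.2.ne_top ((Ideal.eq_top_iff_one _).2 ((hz 1).1 (by simp [h])))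
  obtain ⟨r, m, h1, h2⟩ := he z hz0
  refine ⟨m, fun a => ?_⟩
  rw [← map_eq_zero_iff f hf, map_smul, ← h1, ← mul_smul, hz]
  have hr : r ∉ p.asIdeal := fun h => h2 (by rw [← h1, hz]; exact h)
  exact ⟨fun h => (p.2.mem_or_mem h).resolve_right hr, fun h => p.asIdeal.mul_mem_right _ h⟩

theorem core2 {X : Type} [AddCommGroup X] [Module R X] {d : ℕ}
    (hd : ∀ (N : Type) [AddCommGroup N] [Module R N], ∀ j > d, ev R N X j) (φ : PrimeSpectrum R → ℕ)
    (hφ : ∀ p j, φ p < j → ev R (resField R p) X j) (n j : ℕ) (hj : 1 ≤ j) (hn : d + 1 ≤ j + n)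
    (M : Type) [AddCommGroup M] [Module R M] (hM : ∀ p i, i + j ≤ φ p → dv R p M i) : ev R M X j := by
  induction n generalizing j M with
  | zero => exact hd M j (by omega)
  | succ n ih =>
    obtain ⟨E, _, _, f, hE, hf, he⟩ := exists_hull R M
    refine ev_c2 (ses_coker hf) ?_ (ih (j+1) (by omega) (by omega) _ fun p i hi => ?_)
    · obtain ⟨j, rfl⟩ : ∃ j', j = j' + 1 := ⟨j - 1, by omega⟩
      refine inj_ev_all hE j fun p hp => hφ p _ ?_
      by_contra hc
      exact (dv_zero_iff p).1 (hM p 0 (by omega)) (assE_ess hf he p hp)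
    · exact (hull_shift p (ses_coker hf) hE he i).2 (hM p (i+1) (by omega))

end InjEv


section CharLem
open TensorProduct

section nat
variable {R A : Type} [CommRing R] [CommRing A] [Algebra R A]
variable {M N : Type} [AddCommGroup M] [Module R M] [AddCommGroup N] [Module R N] [Module A N]
  [IsScalarTower R A N] (l : M →ₗ[R] N) (hl : IsBaseChange A l)

def tau (n : ℕ) : M ⊗[R] ((Fin n → A) →ₗ[A] A) ≃ₗ[R] ((Fin n → A) →ₗ[A] N) :=
  (TensorProduct.congr (LinearEquiv.refl R M) (LinearEquiv.piRing A A (Fin n) R)) ≪≫ₗ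
  (TensorProduct.piRight R R M (fun _ : Fin n => A)) ≪≫ₗ
  (LinearEquiv.piCongrRight fun _ => (TensorProduct.comm R M A) ≪≫ₗ (hl.equiv.restrictScalars R)) ≪≫ₗ
  (LinearEquiv.piRing A N (Fin n) R).symm

theorem tau_tmul (n : ℕ) (m : M) (f : (Fin n → A) →ₗ[A] A) (x : Fin n → A) :
    tau l hl n (m ⊗ₜ f) x = f x • l m := by
  have : tau l hl n (m ⊗ₜ f) = (LinearMap.toSpanSingleton A N (l m)).comp f := by
    refine LinearMap.pi_ext' fun i => LinearMap.ext_ring ?_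
    simp [tau, LinearEquiv.piRing_symm_apply, IsBaseChange.equiv_tmul, Pi.single_apply]
  rw [this]; rfl

theorem tau_nat {n m : ℕ} (d : (Fin m → A) →ₗ[A] (Fin n → A)) (z) :
    tau l hl m (LinearMap.lTensor M (d.lcomp R A) z) = d.lcomp R N (tau l hl n z) := by
  induction z with
  | zero => simp
  | add x y hx hy => simp only [map_add, hx, hy]
  | tmul m f =>
    refine LinearMap.ext fun x => ?_
    rw [LinearMap.lTensor_tmul, tau_tmul, LinearMap.lcomp_apply, LinearMap.lcomp_apply, tau_tmul]

variable {T : Type} [AddCommGroup T] [Module A T] (F : FRes A T)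

theorem evT_zero (l : M →ₗ[R] N) (hl : IsBaseChange A l) : ev A T N 0 ↔ ∀ z, LinearMap.lTensor M ((F.d 0).lcomp R A) z = 0 → z = 0 := by
  rw [F.ev_zero, injective_iff_map_eq_zero]
  constructor
  · intro h z hz
    have := h (tau l hl _ z) ((tau_nat l hl (F.d 0) z).symm.trans (by rw [hz, map_zero]))
    simpa using this
  · intro h u hu
    obtain ⟨z, rfl⟩ := (tau l hl _).surjective u
    rw [h z, map_zero]
    apply (tau l hl _).injective
    rw [tau_nat, map_zero]; exact hu

theorem evT_succ (l : M →ₗ[R] N) (hl : IsBaseChange A l) (j : ℕ) : ev A T N (j+1) ↔ ∀ z, LinearMap.lTensor M ((F.d (j+1)).lcomp R A) z = 0 →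
    ∃ y, LinearMap.lTensor M ((F.d j).lcomp R A) y = z := by
  rw [F.ev_exact]
  constructor
  · intro h z hz
    obtain ⟨v, hv⟩ := (h (tau l hl _ z)).1 ((tau_nat l hl (F.d (j+1)) z).symm.trans (by rw [hz, map_zero]))
    obtain ⟨y, rfl⟩ := (tau l hl _).surjective v
    refine ⟨y, (tau l hl _).injective ?_⟩
    rw [tau_nat]; exact hv
  · intro h u
    constructor
    · intro hu
      obtain ⟨z, rfl⟩ := (tau l hl _).surjective u
      obtain ⟨y, rfl⟩ := h z (by
        apply (tau l hl _).injective
        rw [tau_nat, map_zero]; exact hu)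
      exact ⟨tau l hl _ y, (tau_nat l hl (F.d j) y).symm⟩
    · rintro ⟨v, rfl⟩
      refine LinearMap.ext fun x => ?_
      rw [LinearMap.lcomp_apply, LinearMap.lcomp_apply, F.d_apply, F.d_apply, F.pi_incl]; simp
end nat

theorem lT_self {R B C : Type} [CommRing R] [AddCommGroup B] [Module R B] [AddCommGroup C] [Module R C]
    (f : B →ₗ[R] C) (x : B) : LinearMap.lTensor R f (1 ⊗ₜ x) = 0 ↔ f x = 0 := by
  rw [LinearMap.lTensor_tmul, ← (TensorProduct.lid R C).map_eq_zero_iff, TensorProduct.lid_tmul, one_smul]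

theorem step {R B S C : Type} [CommRing R] [AddCommGroup B] [Module R B] [AddCommGroup C] [Module R C]
    [AddCommGroup S] [Module R S] {π : B →ₗ[R] S} {d : B →ₗ[R] C} {i : S →ₗ[R] C} (hs : Function.Surjective π)
    (hi : ∀ x, i (π x) = d x) (_ : ∀ x, π x = 0 → d x = 0)
    (h : ∀ z, LinearMap.lTensor R d z = 0 → LinearMap.lTensor R π z = 0) : SES i (LinearMap.range i).mkQ := by
  refine ses_coker ((injective_iff_map_eq_zero i).2 fun x hx => ?_)
  obtain ⟨x, rfl⟩ := hs x
  rw [hi] at hx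
  exact (lT_self π x).1 (h _ ((lT_self d x).2 hx))

theorem char_lem {R : Type} [CommRing R] [IsNoetherianRing R] (p : PrimeSpectrum R) (j : ℕ)
    (h : ∀ i ≤ j, dv R p R i) :
    ∃ (S : Type) (_ : AddCommGroup S) (_ : Module R S),
      (∀ (M : Type) [AddCommGroup M] [Module R M] (i : ℕ), ev R M (CharacterModule S) (j+2+i)) ∧
      ∀ (M : Type) [AddCommGroup M] [Module R M], ev R M (CharacterModule S) 1 ↔ dv R p M j := by
  haveI : IsNoetherianRing (Localization.AtPrime p.asIdeal) :=
    IsLocalization.isNoetherianRing p.asIdeal.primeCompl _ inferInstance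
  let A := Localization.AtPrime p.asIdeal
  let F : FRes A (IsLocalRing.ResidueField A) := mkFRes A _
  have hbc : ∀ (M : Type) [AddCommGroup M] [Module R M],
      IsBaseChange A (LocalizedModule.mkLinearMap p.asIdeal.primeCompl M) := fun M _ _ =>
    IsLocalizedModule.isBaseChange p.asIdeal.primeCompl A _
  let D : ℕ → Type := fun i => (Fin (F.n i) → A) →ₗ[A] A
  have hfl : ∀ i, Module.Flat R ((Fin (F.n i) → A) →ₗ[A] A) := fun i => Module.Flat.trans R A _
  let δ : ∀ i, ((Fin (F.n i) → A) →ₗ[A] A) →ₗ[R] ((Fin (F.n (i+1)) → A) →ₗ[A] A) := fun i => (F.d i).lcomp R A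
  have key : ∀ j, (∀ i < j, dv R p R i) → ∃ (S : Type) (_ : AddCommGroup S) (_ : Module R S)
      (π : ((Fin (F.n j) → A) →ₗ[A] A) →ₗ[R] S), Function.Surjective π ∧
      (∀ (M : Type) [AddCommGroup M] [Module R M] (i : ℕ), ev R M (CharacterModule S) (j+1+i)) ∧
      (∀ x, π x = 0 → δ j x = 0) ∧
      (∀ (M : Type) [AddCommGroup M] [Module R M],
        dv R p M j ↔ ∀ z, LinearMap.lTensor M (δ j) z = 0 → LinearMap.lTensor M π z = 0) := by
    intro j
    induction j with
    | zero =>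
      intro _
      refine ⟨_, _, _, LinearMap.id, Function.surjective_id, fun M _ _ i => ?_, fun x hx => ?_, fun M _ _ => ?_⟩
      · rw [Nat.zero_add, Nat.add_comm]; exact ev_inj (char_inj (hfl 0)) i
      · rw [LinearMap.id_apply] at hx; rw [hx, map_zero]
      · rw [LinearMap.lTensor_id]
        exact evT_zero F _ (hbc M)
    | succ j ih =>
      intro hj
      obtain ⟨S, _, _, π, hs, hd, h0, hm⟩ := ih fun i hi => hj i (by omega)
      obtain ⟨i, hi⟩ := factor_surj hs (δ j) h0
      have hse := step hs hi h0 ((hm R).1 (hj j (by omega)))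
      refine ⟨_, _, _, (LinearMap.range i).mkQ, hse.surj, fun M _ _ n => ?_, fun x hx => ?_, fun M _ _ => ?_⟩
      · rw [show j+1+1+n = (j+n)+2 by omega, ev_char_shift hse (hfl _)]
        rw [show j+n+1 = j+1+n by omega]
        exact hd M n
      · obtain ⟨y, rfl⟩ := (hse.ex x).1 hx
        obtain ⟨y, rfl⟩ := hs y
        rw [hi]
        refine LinearMap.ext fun x => ?_
        change (LinearMap.lcomp R A (F.d (j+1)) (LinearMap.lcomp R A (F.d j) y)) x = 0
        rw [LinearMap.lcomp_apply, LinearMap.lcomp_apply, F.d_apply, F.d_apply, F.pi_incl]; simp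
      · refine (evT_succ F _ (hbc M) j).trans (forall_congr' fun z => imp_congr_right fun _ => ?_)
        rw [lTensor_exact M hse.ex hse.surj z]
        have hcomp : i.comp π = δ j := LinearMap.ext hi
        change (∃ y, LinearMap.lTensor M (δ j) y = z) ↔ _
        rw [← hcomp, LinearMap.lTensor_comp]
        constructor
        · rintro ⟨y, rfl⟩
          exact ⟨_, rfl⟩
        · rintro ⟨y, rfl⟩
          obtain ⟨y, rfl⟩ := LinearMap.lTensor_surjective M hs y
          exact ⟨_, rfl⟩
  obtain ⟨S, _, _, π, hs, hd, h0, hm⟩ := key j fun i hi => h i (by omega)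
  obtain ⟨i, hi⟩ := factor_surj hs (δ j) h0
  have hse := step hs hi h0 ((hm R).1 (h j le_rfl))
  refine ⟨((Fin (F.n (j+1)) → A) →ₗ[A] A) ⧸ LinearMap.range i, inferInstance, inferInstance, fun M _ _ n => ?_, fun M _ _ => ?_⟩
  · rw [show j+2+n = (j+n)+2 by omega, ev_char_shift hse (hfl _), show j+n+1 = j+1+n by omega]
    exact hd M n
  · rw [ev_char_one hse (hfl _), hm M, injective_iff_map_eq_zero]
    have hcomp : i.comp π = δ j := LinearMap.ext hi
    rw [← hcomp, LinearMap.lTensor_comp]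
    constructor
    · intro h z hz
      exact h _ hz
    · intro h y hy
      obtain ⟨y, rfl⟩ := LinearMap.lTensor_surjective M hs y
      exact h y hy
end CharLem


section Fin1
variable {R : Type} [CommRing R]

theorem ev_smul {M N : Type} [AddCommGroup M] [Module R M] [AddCommGroup N] [Module R N] (a : R)
    (g : N →ₗ[R] N) (hg : ∀ x, a • g x = x) (hM : ∀ x : M, a • x = 0) (n : ℕ) : ev R M N n := by
  rw [ev_iff]
  refine subsingleton_of_forall_eq 0 fun x => ?_
  have h1 : a • (ModuleCat.ofHom g) = 𝟙 (ModuleCat.of R N) := by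
    ext y; exact hg y
  have h2 : a • 𝟙 (ModuleCat.of R M) = 0 := by
    ext y; exact hM y
  have h3 : x = a • (x.comp (Abelian.Ext.mk₀ (ModuleCat.ofHom g)) (add_zero n)) := by
    rw [← Abelian.Ext.comp_smul, ← Abelian.Ext.mk₀_smul, h1, Abelian.Ext.comp_mk₀_id]
  rw [h3, ← Abelian.Ext.mk₀_id_comp (x.comp _ _), ← Abelian.Ext.smul_comp, ← Abelian.Ext.mk₀_smul, h2, Abelian.Ext.mk₀_zero,
    Abelian.Ext.zero_comp]

theorem kp_ass (p : PrimeSpectrum R) : AssE p (resField R p) := by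
  refine ⟨LocalizedModule.mkLinearMap p.asIdeal.primeCompl _ (Submodule.Quotient.mk 1), fun a => ?_⟩
  rw [← map_smul, ← Submodule.Quotient.mk_smul, smul_eq_mul, mul_one,
    IsLocalizedModule.eq_zero_iff p.asIdeal.primeCompl]
  constructor
  · rintro ⟨c, hc⟩
    rw [Submonoid.smul_def, ← Submodule.Quotient.mk_smul, Submodule.Quotient.mk_eq_zero] at hc
    exact (p.2.mem_or_mem hc).resolve_left c.2
  · intro ha
    exact ⟨1, by rw [one_smul]; exact (Submodule.Quotient.mk_eq_zero _).2 ha⟩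

theorem kp_dv (p q : PrimeSpectrum R) (h : q ≠ p) (n : ℕ) : dv R q (resField R p) n := by
  by_cases hpq : p.asIdeal ≤ q.asIdeal
  · have : ¬ q.asIdeal ≤ p.asIdeal := fun h' => h (PrimeSpectrum.ext (le_antisymm h' hpq))
    obtain ⟨a, haq, hap⟩ := Set.not_subset.1 this
    obtain ⟨u, hu⟩ := IsLocalizedModule.map_units (S := p.asIdeal.primeCompl)
      (LocalizedModule.mkLinearMap p.asIdeal.primeCompl (R ⧸ p.asIdeal)) ⟨a, hap⟩
    let g : resField R p →ₗ[R] resField R p := (u⁻¹).val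
    have hg : ∀ x, a • g x = x := by
      intro x
      have := LinearMap.congr_fun u.mul_inv x
      rw [hu] at this
      exact this
    refine ev_smul (algebraMap R _ a) (LocalizedModule.map q.asIdeal.primeCompl g) (fun x => ?_) (fun x => ?_) n
    · induction x using LocalizedModule.induction_on with
      | h m s =>
        rw [LocalizedModule.map_mk, algebraMap_smul, LocalizedModule.smul'_mk, hg]
    · rw [Algebra.smul_def]
      have : algebraMap (Localization.AtPrime q.asIdeal)
          (IsLocalRing.ResidueField (Localization.AtPrime q.asIdeal)) (algebraMap R _ a) = 0 := by
        rw [IsLocalRing.ResidueField.algebraMap_eq, IsLocalRing.residue_eq_zero_iff]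
        exact (IsLocalization.AtPrime.to_map_mem_maximal_iff _ q.asIdeal a).2 haq
      rw [this, zero_mul]
  · obtain ⟨a, hap, haq⟩ := Set.not_subset.1 hpq
    have : Subsingleton (LocalizedModule q.asIdeal.primeCompl (resField R p)) := by
      rw [LocalizedModule.subsingleton_iff]
      intro m
      refine ⟨a, haq, ?_⟩
      induction m using LocalizedModule.induction_on with
      | h m s =>
        obtain ⟨r, rfl⟩ := Submodule.Quotient.mk_surjective _ m
        rw [LocalizedModule.smul'_mk, ← Submodule.Quotient.mk_smul,
          smul_eq_mul, (Submodule.Quotient.mk_eq_zero _).2 (p.asIdeal.mul_mem_right r hap), LocalizedModule.zero_mk]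
    exact ev_smul 0 0 (fun x => Subsingleton.elim _ _) (fun x => zero_smul _ x) n

end Fin1

section Fin2
variable {R : Type} [CommRing R]

theorem mem_depth {φ : PrimeSpectrum R → ℕ} {M : ModuleCat.{0} R} :
    M ∈ depthClass R φ ↔ ∀ p i, i < φ p → dv R p M i :=
  forall_congr' fun p => le_depthAt p M (φ p)

theorem good3_iff {φ : PrimeSpectrum R → ℕ} : GoodIII R φ ↔ ∀ p i, i < φ p → dv R p R i :=
  forall_congr' fun p => (le_rdepth _ _ (φ p)).trans
    (forall_congr' fun i => imp_congr_right fun _ => (dv_ring p i).symm)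

theorem dv_free [IsNoetherianRing R] (p : PrimeSpectrum R) (n : ℕ) (h : ∀ i < n, dv R p R i) (F : Type) [AddCommGroup F] [Module R F]
    [Module.Projective R F] (i : ℕ) (hi : i < n) : dv R p F i := by
  obtain ⟨S, _, _, -, hS⟩ := char_lem p i fun j hj => h j (by omega)
  exact (hS F).1 (ev_proj 0)

theorem syz_dv [IsNoetherianRing R] {φ : PrimeSpectrum R → ℕ} (hφ : GoodIII R φ) (M : Type) [AddCommGroup M] [Module R M] (n : ℕ) :
    (∀ p i, i + n < φ p → dv R p (Syz R M) i) ↔ ∀ p i, i + (n+1) < φ p → dv R p M i := by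
  rw [good3_iff] at hφ
  have hF : ∀ p i, i < φ p → dv R p (Fr R M) i := fun p i hi => dv_free p (φ p) (hφ p) _ i hi
  constructor
  · intro h p i hi
    exact dv_k3 p (ses_syz R M) (hF p i (by omega)) (h p (i+1) (by omega))
  · intro h p i hi
    cases i with
    | zero =>
      rw [dv_zero_iff]
      rintro ⟨z, hz⟩
      refine (dv_zero_iff p).1 (hF p 0 (by omega)) ⟨z.1, fun a => ?_⟩
      rw [← hz a, Subtype.ext_iff]; rfl
    | succ i =>
      exact dv_k2 p (ses_syz R M) (h p i (by omega)) (hF p _ (by omega))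

theorem depth_syz [IsNoetherianRing R] {φ : PrimeSpectrum R → ℕ} (hφ : GoodIII R φ) {M : ModuleCat.{0} R}
    (hM : M ∈ depthClass R φ) : ModuleCat.of R (Syz R M) ∈ depthClass R φ := by
  rw [mem_depth] at *
  intro p i hi
  refine (syz_dv hφ M 0).2 (fun p i hi => hM p i (by omega)) p i hi

/-- heredity from closure under syzygies -/
theorem hered {C : Set (ModuleCat.{0} R)} (hC : ∀ M ∈ C, ModuleCat.of R (Syz R M) ∈ C) (N : ModuleCat.{0} R)
    (hN : ∀ M ∈ C, extV R M N 1) (i : ℕ) : ∀ M ∈ C, extV R M N (i+1) := by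
  induction i with
  | zero => exact hN
  | succ i ih =>
    intro M hM
    exact (ev_shift_l (N := N) (ses_syz R M) i).2 (ih _ (hC M hM))

theorem cot_succ {W : Set (ModuleCat.{0} R)} {M : ModuleCat.{0} R} {i : ℕ} :
    M ∈ cotShift R W (i+1) ↔ ModuleCat.of R (Syz R M) ∈ cotShift R W i := by
  constructor
  · intro h Y hY j hj
    obtain ⟨j, rfl⟩ : ∃ j', j = j' + 1 := ⟨j - 1, by omega⟩
    exact (ev_shift_l (N := Y) (ses_syz R M) j).1 (h Y hY (j+2) (by omega))
  · intro h Y hY j hj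
    obtain ⟨j, rfl⟩ : ∃ j', j = j' + 2 := ⟨j - 2, by omega⟩
    exact (ev_shift_l (N := Y) (ses_syz R M) j).2 (h Y hY (j+1) (by omega))

theorem cot_zero {C W : Set (ModuleCat.{0} R)} (h : IsHereditaryCotorsionPair R C W) : cotShift R W 0 = C := by
  ext M
  constructor
  · intro hM
    rw [h.1.1]
    exact fun Y hY => hM Y hY 1 (by omega)
  · intro hM Y hY j hj
    exact h.2 M hM Y hY j hj

theorem cot_depth [IsNoetherianRing R] {φ : PrimeSpectrum R → ℕ} (hφ : GoodIII R φ) {W : Set (ModuleCat.{0} R)}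
    (h : IsHereditaryCotorsionPair R (depthClass R φ) W) (i : ℕ) : ∀ M : ModuleCat.{0} R,
    M ∈ cotShift R W i ↔ ∀ p j, j + i < φ p → dv R p M j := by
  induction i with
  | zero => intro M; rw [cot_zero h, mem_depth]; rfl
  | succ i ih => intro M; rw [cot_succ, ih]; exact syz_dv hφ M i

/-- conjunct 1 -/
theorem c1 {E C : Set (ModuleCat.{0} R)} (h : GoodI R E C) : GoodII R C (rightPerp1 R C) := by
  obtain ⟨⟨⟨hE, hC⟩, hh⟩, G, hG, hCG⟩ := h
  let Q : Set (ModuleCat.{0} R) := {Y | ∃ X ∈ G, Y = ModuleCat.of R (CharacterModule X)}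
  have hQ : C = leftPerp1 R Q := by
    rw [hCG]
    ext M
    constructor
    · rintro hM _ ⟨X, hX, rfl⟩
      exact (torV_iff X M 0).1 (hM X hX)
    · intro hM X hX
      exact (torV_iff X M 0).2 (hM _ ⟨X, hX, rfl⟩)
  have hs : ∀ M ∈ C, ModuleCat.of R (Syz R M) ∈ C := by
    intro M hM
    rw [hC]
    intro X hX
    rw [torV_iff]
    exact (ev_shift_l (N := CharacterModule X) (ses_syz R M) 0).1 ((torV_iff X M 1).1 (hh X hX M hM 2 (by omega)))
  refine ⟨⟨⟨?_, rfl⟩, fun X hX Y hY i hi => ?_⟩, Q, ?_, hQ⟩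
  · apply Set.Subset.antisymm
    · exact fun M hM Y hY => hY M hM
    · intro M hM
      rw [hQ]
      refine fun Y hY => hM Y fun N hN => ?_
      rw [hQ] at hN
      exact hN Y hY
  · obtain ⟨i, rfl⟩ : ∃ j', i = j' + 1 := ⟨i - 1, by omega⟩
    exact hered hs Y hY i X hX
  · rintro _ ⟨X, hX, rfl⟩
    obtain ⟨n, hn⟩ := hG X hX
    exact ⟨pureInj_char R X, n, (flatDimLE_iff X n).1 hn⟩

/-- conjunct 2 -/
theorem c2 [IsNoetherianRing R] {φ : PrimeSpectrum R → ℕ} (hφ : GoodIII R φ) :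
    GoodI R (torLeft1 R (depthClass R φ)) (depthClass R φ) := by
  let G : Set (ModuleCat.{0} R) := {X | ∃ p j, j < φ p ∧ flatDimLE R X (j+1) ∧
    ∀ M : ModuleCat.{0} R, extV R M (ModuleCat.of R (CharacterModule X)) 1 ↔ dv R p M j}
  have hG : depthClass R φ = torRight1 R G := by
    ext M
    rw [mem_depth]
    constructor
    · rintro hM X ⟨p, j, hj, hf, hX⟩
      exact (torV_iff X M 0).2 ((hX M).2 (hM p j hj))
    · intro hM p i hi
      obtain ⟨S, _, _, hS, hS'⟩ := char_lem p i fun j hj => good3_iff.1 hφ p j (by omega)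
      refine (hS' M).1 ((torV_iff (ModuleCat.of R S) M 0).1 (hM _ ⟨p, i, hi, ?_, fun M => hS' M⟩))
      rw [flatDimLE_iff]
      intro N j hj
      obtain ⟨k, rfl⟩ : ∃ k, j = i + 2 + k := ⟨j - (i+2), by omega⟩
      exact hS N k
  refine ⟨⟨⟨rfl, ?_⟩, fun X hX Y hY i hi => ?_⟩, G, ?_, hG⟩
  · apply Set.Subset.antisymm
    · exact fun M hM X hX => hX M hM
    · intro M hM
      rw [hG]
      refine fun X hX => hM X fun N hN => ?_
      rw [hG] at hN
      exact hN X hX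
  · obtain ⟨i, rfl⟩ : ∃ j', i = j' + 1 := ⟨i - 1, by omega⟩
    rw [torV_iff]
    exact hered (fun M hM => depth_syz hφ hM) _ (fun M hM => (torV_iff X M 0).1 (hX M hM)) i Y hY
  · rintro X ⟨p, j, hj, hf, hX⟩
    exact ⟨_, hf⟩

theorem c4 [IsNoetherianRing R] {φ : PrimeSpectrum R → ℕ} (hφ : GoodIII R φ) :
    phiOfCot R (rightPerp1 R (depthClass R φ)) = φ := by
  have h := cot_depth hφ (c1 (c2 hφ)).1
  funext p
  have : {i : ℕ | ModuleCat.of R (resField R p) ∈ cotShift R (rightPerp1 R (depthClass R φ)) i} = Set.Ici (φ p) := by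
    ext i
    rw [Set.mem_ofPred_eq, h]
    constructor
    · intro hi
      by_contra hc
      exact (dv_zero_iff p).1 (hi p 0 (by rw [Set.mem_Ici] at hc; omega)) (kp_ass p)
    · intro hi q j hj
      refine kp_dv p q ?_ j
      rintro rfl
      rw [Set.mem_Ici] at hi; omega
  unfold phiOfCot
  rw [this, csInf_Ici]

section G2
variable [IsNoetherianRing R] {C W : Set (ModuleCat.{0} R)}

theorem cot_pcl {P : Set (ModuleCat.{0} R)} (hh : IsHereditaryCotorsionPair R C W) (hP : C = leftPerp1 R P) (i : ℕ) : ∀ M : ModuleCat.{0} R,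
    (M ∈ cotShift R W i ↔ ∀ X ∈ P, ∀ j, i < j → extV R M X j) := by
  have hPW : P ⊆ W := by
    intro X hX
    rw [hh.1.2]
    intro M hM
    rw [hP] at hM
    exact hM X hX
  induction i with
  | zero =>
    intro M
    refine ⟨fun hM X hX j hj => hM X (hPW hX) j hj, fun hM => ?_⟩
    rw [cot_zero hh, hP]
    exact fun X hX => hM X hX 1 (by omega)
  | succ i ih =>
    intro M
    refine ⟨fun hM X hX j hj => hM X (hPW hX) j hj, fun hM => ?_⟩
    rw [cot_succ, ih]
    intro X hX j hj
    obtain ⟨j, rfl⟩ : ∃ j', j = j' + 1 := ⟨j - 1, by omega⟩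
    exact (ev_shift_l (N := X) (ses_syz R M) j).1 (hM X hX (j+2) (by omega))

theorem kp_cot (h : GoodII R C W) (M : ModuleCat.{0} R) (hM : M ∈ C) (p : PrimeSpectrum R) (m : ℕ) (hm : ¬ dv R p M m) :
    ModuleCat.of R (resField R p) ∈ cotShift R W m := by
  obtain ⟨hh, P, hP, hC⟩ := h
  rw [cot_pcl hh hC]
  intro X hX j hj
  obtain ⟨hpi, d, hd⟩ := hP X hX
  obtain ⟨e⟩ := kp_iso_res p
  refine (ev_congr (N := X) e).2 ?_
  refine core1' hpi (fun N _ _ j hj => hd (ModuleCat.of R N) j hj) p M (fun j => ?_) hm j hj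
  rw [← cot_zero hh, cot_pcl hh hC] at hM
  exact hM X hX (j+1) (by omega)

theorem ring_mem (h : GoodII R C W) : ModuleCat.of R R ∈ C := by
  rw [h.1.1.1]
  exact fun Y _ => ev_proj (N := Y) 0

theorem kp_mem (h : GoodII R C W) (p : PrimeSpectrum R) : ModuleCat.of R (resField R p) ∈ cotShift R W (phiOfCot R W p) := by
  obtain ⟨i, hi⟩ := dv_ring_fin p
  exact Nat.sInf_mem (s := {i : ℕ | ModuleCat.of R (resField R p) ∈ cotShift R W i})
    ⟨i, kp_cot h _ (ring_mem h) p i hi⟩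

theorem mem_dv (h : GoodII R C W) (M : ModuleCat.{0} R) (hM : M ∈ C) (p : PrimeSpectrum R) (i : ℕ) (hi : i < phiOfCot R W p) : dv R p M i := by
  by_contra hc
  have := Nat.sInf_le (s := {i : ℕ | ModuleCat.of R (resField R p) ∈ cotShift R W i}) (kp_cot h M hM p i hc)
  exact absurd hi (not_lt.2 this)

theorem c3a (h : GoodII R C W) : GoodIII R (phiOfCot R W) :=
  good3_iff.2 fun p i hi => mem_dv h _ (ring_mem h) p i hi

theorem c6 (h : GoodII R C W) : depthClass R (phiOfCot R W) = C := by
  ext M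
  rw [mem_depth]
  refine ⟨fun hM => ?_, fun hM p i hi => mem_dv h M hM p i hi⟩
  have hk := kp_mem h
  obtain ⟨hh, P, hP, hC⟩ := h
  rw [hC]
  intro X hX
  obtain ⟨hpi, d, hd⟩ := hP X hX
  refine core2 (X := X) (d := d) (fun N _ _ j hj => hd (ModuleCat.of R N) j hj) (phiOfCot R W) (fun p j hj => ?_) d 1 le_rfl
    (by omega) M (fun p i hi => hM p i (by omega))
  exact (cot_pcl hh hC _ _).1 (hk p) X hX j hj

theorem c7 (h : GoodII R C W) (n : ℕ) : seqOfCot R W n = {p | phiOfCot R W p ≤ n} := by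
  have h6 := c6 h
  have hd := cot_depth (c3a h) (by rw [h6]; exact h.1) n
  ext p
  constructor
  · rintro ⟨M, hM, hp⟩
    by_contra hc
    rw [Set.mem_ofPred_eq] at hc
    exact (dv_zero_iff p).1 ((hd M).1 hM p 0 (by omega)) ((assE_iff p).1 hp)
  · intro hp
    exact ⟨_, fun Y hY j hj => kp_mem h p Y hY j (lt_of_le_of_lt hp hj), (assE_iff p).2 (kp_ass p)⟩

theorem c3b (h : GoodII R C W) : GoodIV R (seqOfCot R W) := by
  refine ⟨fun n => ?_, fun n s p hp => ?_⟩
  · rw [c7 h, c7 h]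
    exact fun p hp => Nat.le_succ_of_le hp
  · rw [c7 h]
    have h1 := (cosyz_ass s p n).1 hp
    by_contra hc
    rw [Set.mem_ofPred_eq, not_le] at hc
    exact h1 (mem_dv h _ (ring_mem h) p n hc)

end G2

theorem c8 [IsNoetherianRing R] {X : ℕ → Set (PrimeSpectrum R)} (hX : GoodIV R X) :
    ∃ C W : Set (ModuleCat.{0} R), GoodII R C W ∧ seqOfCot R W = X := by
  obtain ⟨s⟩ := exists_cosyz R R
  have hmem : ∀ p n, ¬ dv R p R n → p ∈ X n := fun p n h => hX.2 n s ((cosyz_ass s p n).2 h)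
  let φ : PrimeSpectrum R → ℕ := fun p => sInf {n | p ∈ X n}
  have hφ : GoodIII R φ := good3_iff.2 fun p i hi => by
    by_contra hc
    exact absurd hi (not_lt.2 (Nat.sInf_le (s := {n | p ∈ X n}) (hmem p i hc)))
  have h2 := c1 (c2 hφ)
  refine ⟨_, _, h2, ?_⟩
  funext n
  rw [c7 h2, c4 hφ]
  ext p
  constructor
  · intro hp
    obtain ⟨i, hi⟩ := dv_ring_fin p
    have := Nat.sInf_mem (s := {n | p ∈ X n}) ⟨i, hmem p i hi⟩
    exact monotone_nat_of_le_succ hX.1 hp this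
  · intro hp
    exact Nat.sInf_le (s := {n | p ∈ X n}) hp

theorem c7b [IsNoetherianRing R] {C W C' W' : Set (ModuleCat.{0} R)} (h : GoodII R C W) (h' : GoodII R C' W')
    (he : seqOfCot R W = seqOfCot R W') : C = C' ∧ W = W' := by
  have hφ : phiOfCot R W = phiOfCot R W' := by
    funext p
    have : ∀ n, phiOfCot R W p ≤ n ↔ phiOfCot R W' p ≤ n := by
      intro n
      have := congrFun he n
      rw [c7 h, c7 h'] at this
      exact Set.ext_iff.1 this p
    exact le_antisymm ((this _).2 le_rfl) ((this _).1 le_rfl)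
  have hC : C = C' := by rw [← c6 h, ← c6 h', hφ]
  refine ⟨hC, ?_⟩
  rw [h.1.1.2, h'.1.1.2, hC]

end Fin2


section Stmt17

variable (R : Type) [CommRing R]

/-- main classification: over a commutative noetherian ring the four
collections (i)-(iv) are in bijective correspondence via the explicit assignments
`(ℰ,𝒞) ↦ (𝒞, 𝒞^⊥)`, `φ ↦ (^⊤(𝒞_φ), 𝒞_φ)`, `(𝒞,𝒲) ↦ φ_𝒞` and `(𝒞,𝒲) ↦ (Ass 𝒞_(n))_n`,
and these assignments are mutually inverse bijections. -/
theorem stmt17 [IsNoetherianRing R] :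
    -- the assignment (i) → (ii) is well defined
    (∀ ℰ 𝒞 : Set (ModuleCat.{0} R), GoodI R ℰ 𝒞 → GoodII R 𝒞 (rightPerp1 R 𝒞)) ∧
    -- the assignment (iii) → (i) is well defined
    (∀ φ : PrimeSpectrum R → ℕ, GoodIII R φ →
      GoodI R (torLeft1 R (depthClass R φ)) (depthClass R φ)) ∧
    -- the assignments (ii) → (iii) and (ii) → (iv) are well defined
    (∀ 𝒞 𝒲 : Set (ModuleCat.{0} R), GoodII R 𝒞 𝒲 →
      GoodIII R (phiOfCot R 𝒲) ∧ GoodIV R (seqOfCot R 𝒲)) ∧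
    -- round trip (iii) → (i) → (ii) → (iii)
    (∀ φ : PrimeSpectrum R → ℕ, GoodIII R φ →
      phiOfCot R (rightPerp1 R (depthClass R φ)) = φ) ∧
    -- round trip (i) → (ii) → (iii) → (i)
    (∀ ℰ 𝒞 : Set (ModuleCat.{0} R), GoodI R ℰ 𝒞 →
      torLeft1 R (depthClass R (phiOfCot R (rightPerp1 R 𝒞))) = ℰ ∧
      depthClass R (phiOfCot R (rightPerp1 R 𝒞)) = 𝒞) ∧
    -- round trip (ii) → (iii) → (i) → (ii)
    (∀ 𝒞 𝒲 : Set (ModuleCat.{0} R), GoodII R 𝒞 𝒲 →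
      depthClass R (phiOfCot R 𝒲) = 𝒞 ∧
      rightPerp1 R (depthClass R (phiOfCot R 𝒲)) = 𝒲) ∧
    -- the assignment (ii) → (iv) is injective
    (∀ 𝒞 𝒲 𝒞' 𝒲' : Set (ModuleCat.{0} R), GoodII R 𝒞 𝒲 → GoodII R 𝒞' 𝒲' →
      seqOfCot R 𝒲 = seqOfCot R 𝒲' → 𝒞 = 𝒞' ∧ 𝒲 = 𝒲') ∧
    -- the assignment (ii) → (iv) is surjective
    (∀ X : ℕ → Set (PrimeSpectrum R), GoodIV R X →
      ∃ 𝒞 𝒲 : Set (ModuleCat.{0} R), GoodII R 𝒞 𝒲 ∧ seqOfCot R 𝒲 = X) := by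
  refine ⟨fun E C h => c1 h, fun φ h => c2 h, fun C W h => ⟨c3a h, c3b h⟩, fun φ h => c4 h,
    fun E C h => ?_, fun C W h => ?_, fun C W C' W' h h' he => c7b h h' he, fun X h => c8 h⟩
  · have h6 := c6 (c1 h)
    refine ⟨?_, h6⟩
    rw [h6]; exact h.1.1.1.symm
  · have h6 := c6 h
    refine ⟨h6, ?_⟩
    rw [h6]; exact h.1.1.2.symm

end Stmt17
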